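/- arXiv:2005.01150 — 10 statements merged into one kernel-verified Lean document; each statement's English description precedes it below -/
import Mathlib

section
/- Every lattice homomorphism T on ℓ^p (1 ≤ p < ∞) has a non-trivial closed invariant subspace; moreover, T has a non-trivial closed invariant ideal. -/
open scoped ENNReal

noncomputable section

/-- The `n`-th canonical unit vector of real `ℓᵖ`. -/
def e (p : ℝ≥0∞) (n : ℕ) : lp (fun _ : ℕ => ℝ) p := lp.single p n 1

/-- `T` is a lattice homomorphism: it sends coordinatewise suprema to
coordinatewise suprema. -/
def IsLatticeHom (p : ℝ≥0∞) [Fact (1 ≤ p)]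
    (T : lp (fun _ : ℕ => ℝ) p →L[ℝ] lp (fun _ : ℕ => ℝ) p) : Prop :=
  ∀ x y z : lp (fun _ : ℕ => ℝ) p,
    (∀ n, z n = max (x n) (y n)) → ∀ n, (T z) n = max ((T x) n) ((T y) n)

/-- `T` is a positive operator for the coordinatewise order. -/
def IsPositiveOp (p : ℝ≥0∞) [Fact (1 ≤ p)]
    (T : lp (fun _ : ℕ => ℝ) p →L[ℝ] lp (fun _ : ℕ => ℝ) p) : Prop :=
  ∀ x : lp (fun _ : ℕ => ℝ) p, (∀ n, 0 ≤ x n) → ∀ n, 0 ≤ (T x) n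

/-- `T` has a non-trivial closed invariant ideal. -/
def HasNontrivialClosedInvariantIdeal (p : ℝ≥0∞) [Fact (1 ≤ p)]
    (T : lp (fun _ : ℕ => ℝ) p →L[ℝ] lp (fun _ : ℕ => ℝ) p) : Prop :=
  ∃ I : Submodule ℝ (lp (fun _ : ℕ => ℝ) p),
    IsClosed (I : Set (lp (fun _ : ℕ => ℝ) p)) ∧ I ≠ ⊥ ∧ I ≠ ⊤ ∧
    (∀ x y : lp (fun _ : ℕ => ℝ) p, (∀ n, |x n| ≤ |y n|) → y ∈ I → x ∈ I) ∧
    (∀ x ∈ I, T x ∈ I)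

/-- The matrix of `T` is tridiagonal. -/
def IsTridiagonal (p : ℝ≥0∞) [Fact (1 ≤ p)]
    (T : lp (fun _ : ℕ => ℝ) p →L[ℝ] lp (fun _ : ℕ => ℝ) p) : Prop :=
  ∀ n m : ℕ, (m + 1 < n ∨ n + 1 < m) → (T (e p m)) n = 0

/-! Rows of a lattice homomorphism are lattice homomorphisms into `ℝ`, and such a functional is
either zero on a given unit vector or a multiple of that coordinate. If `f` is a lattice
functional, the vectors `x` with `f (T ^ k x) = 0` for all `k` form a closed invariant ideal,
proper as soon as `f ≠ 0`. Take `f x = (T x) i`. If the ideal does not contain the unit vector at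
`i`, then some `f ∘ T ^ k` is a multiple of the coordinate `i`, so the functionals `f ∘ T ^ k`
repeat up to scalars: only finitely many conditions are left, each violated by at most one unit
vector. If `f = 0`, use the coordinate `i` instead: its ideal is then just its kernel. -/

section OrbitAnnihilator

variable {R E F : Type*} [Semiring R] [AddCommMonoid E] [Module R E] [TopologicalSpace E]
  [AddCommMonoid F] [Module R F] [TopologicalSpace F] {f : E →L[R] F} {T : E →L[R] E}

/-- The common kernel of the maps `f ∘ T ^ k`, `k ≥ 0`: the largest `T`-invariant subspace on which
`f` vanishes. For a functional `f` it is the pre-annihilator of the orbit of `f` under the adjoint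
of `T`. -/
def orbitAnnihilator (f : E →L[R] F) (T : E →L[R] E) : Submodule R E :=
  ⨅ k : ℕ, (f ∘L T ^ k).ker

theorem mem_orbitAnnihilator {x : E} :
    x ∈ orbitAnnihilator f T ↔ ∀ k : ℕ, f ((T ^ k) x) = 0 :=
  Submodule.mem_iInf _

theorem isClosed_orbitAnnihilator [T1Space F] (f : E →L[R] F) (T : E →L[R] E) :
    IsClosed (orbitAnnihilator f T : Set E) := by
  rw [orbitAnnihilator, Submodule.coe_iInf]
  exact isClosed_iInter fun k ↦ (f ∘L T ^ k).isClosed_ker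

theorem map_mem_orbitAnnihilator {x : E} (hx : x ∈ orbitAnnihilator f T) :
    T x ∈ orbitAnnihilator f T :=
  mem_orbitAnnihilator.2 fun k ↦ mem_orbitAnnihilator.1 hx (k + 1)

theorem orbitAnnihilator_ne_top (T : E →L[R] E) (hf : f ≠ 0) : orbitAnnihilator f T ≠ ⊤ := by
  refine fun htop ↦ hf (ContinuousLinearMap.ext fun x ↦ ?_)
  exact mem_orbitAnnihilator.1 (htop ▸ Submodule.mem_top : x ∈ orbitAnnihilator f T) 0

theorem mem_orbitAnnihilator_of_apply_pow_eq_smul {N : ℕ} (hN : 0 < N) {c : R}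
    (hrec : ∀ y, f ((T ^ N) y) = c • f y) {x : E} (hx : ∀ k < N, f ((T ^ k) x) = 0) :
    x ∈ orbitAnnihilator f T := by
  refine mem_orbitAnnihilator.2 fun k ↦ ?_
  induction k using Nat.strong_induction_on with
  | _ k ih =>
    obtain hlt | hle := lt_or_ge k N
    · exact hx k hlt
    · obtain ⟨l, rfl⟩ := Nat.exists_eq_add_of_le hle
      rw [pow_add, mul_apply_eq_comp, hrec, ih l (by lia), smul_zero]

end OrbitAnnihilator

section LatticeFunctional

open scoped lp

variable {ι κ : Type*} {p q : ℝ≥0∞}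

theorem lp_single_ne_zero {E : ι → Type*} [∀ i, NormedAddCommGroup (E i)] [DecidableEq ι] {i : ι}
    {a : E i} (ha : a ≠ 0) : lp.single p i a ≠ 0 := by
  intro h
  simpa [ha] using congrArg (fun x : lp E p ↦ x i) h

variable [Fact (1 ≤ p)] [Fact (1 ≤ q)]

/-- A continuous functional on `ℓᵖ(ι)` is a lattice functional if it is a lattice homomorphism into
`ℝ`. The supremum enters as a vector `z` with the right coordinates, since `lp` carries no order
structure. -/
def IsLatticeFunctional (f : ℓ^p(ι, ℝ) →L[ℝ] ℝ) : Prop :=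
  ∀ x y z : ℓ^p(ι, ℝ), (∀ i, z i = max (x i) (y i)) → f z = max (f x) (f y)

/-- A continuous operator from `ℓᵖ(ι)` to `ℓ^q(κ)` is a lattice operator if it preserves
coordinatewise suprema; for `ι = κ = ℕ` and `p = q` this unfolds to `IsLatticeHom`. -/
def IsLatticeOperator (T : ℓ^p(ι, ℝ) →L[ℝ] ℓ^q(κ, ℝ)) : Prop :=
  ∀ x y z : ℓ^p(ι, ℝ),
    (∀ i, z i = max (x i) (y i)) → ∀ j, (T z) j = max ((T x) j) ((T y) j)

theorem isLatticeFunctional_evalCLM (p : ℝ≥0∞) [Fact (1 ≤ p)] (i : ι) :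
    IsLatticeFunctional (lp.evalCLM ℝ (fun _ : ι ↦ ℝ) p i) :=
  fun _ _ _ hz ↦ hz i

namespace IsLatticeFunctional

variable {f : ℓ^p(ι, ℝ) →L[ℝ] ℝ}

theorem comp {g : ℓ^q(κ, ℝ) →L[ℝ] ℝ} (hg : IsLatticeFunctional g)
    {T : ℓ^p(ι, ℝ) →L[ℝ] ℓ^q(κ, ℝ)} (hT : IsLatticeOperator T) :
    IsLatticeFunctional (g ∘L T) :=
  fun x y z hz ↦ hg (T x) (T y) (T z) (hT x y z hz)

theorem comp_pow (hf : IsLatticeFunctional f)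
    {T : ℓ^p(ι, ℝ) →L[ℝ] ℓ^p(ι, ℝ)} (hT : IsLatticeOperator T) (k : ℕ) :
    IsLatticeFunctional (f ∘L T ^ k) := by
  induction k with
  | zero => exact hf
  | succ k ih => exact ih.comp hT

theorem apply_le_apply (hf : IsLatticeFunctional f) {x y : ℓ^p(ι, ℝ)}
    (hxy : ∀ i, x i ≤ y i) : f x ≤ f y :=
  max_eq_right_iff.1 (hf x y y fun i ↦ (max_eq_right (hxy i)).symm).symm

theorem apply_toNorm (hf : IsLatticeFunctional f) (x : ℓ^p(ι, ℝ)) :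
    f (lp.toNorm x) = |f x| := by
  rw [hf x (-x) (lp.toNorm x) fun _ ↦ rfl, map_neg, abs_eq_max_neg]

theorem abs_apply_le_abs_apply (hf : IsLatticeFunctional f) {x y : ℓ^p(ι, ℝ)}
    (hxy : ∀ i, |x i| ≤ |y i|) : |f x| ≤ |f y| := by
  rw [← hf.apply_toNorm x, ← hf.apply_toNorm y]
  exact hf.apply_le_apply hxy

theorem apply_eq_zero_or_apply_eq_zero (hf : IsLatticeFunctional f) {x y : ℓ^p(ι, ℝ)}
    (hxy : ∀ i, x i = 0 ∨ y i = 0) : f x = 0 ∨ f y = 0 := by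
  have sum_eq_sup (i : ι) :
      (lp.toNorm x + lp.toNorm y) i = max (lp.toNorm x i) (lp.toNorm y i) := by
    rcases hxy i with h | h <;> simp [h]
  have sum_eq_max : |f x| + |f y| = max |f x| |f y| := by
    rw [← hf.apply_toNorm, ← hf.apply_toNorm, ← map_add, hf _ _ _ sum_eq_sup]
  rcases max_choice |f x| |f y| with h | h <;> rw [h] at sum_eq_max
  · exact .inr (abs_eq_zero.1 (by linarith))
  · exact .inl (abs_eq_zero.1 (by linarith))

section Single

variable [DecidableEq ι]

theorem subsingleton_setOf_apply_single_ne_zero (hf : IsLatticeFunctional f) :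
    {i | f (lp.single p i 1) ≠ 0}.Subsingleton := by
  intro i hi j hj
  by_contra hij
  refine (hf.apply_eq_zero_or_apply_eq_zero fun k ↦ ?_).elim hi hj
  obtain rfl | hk := eq_or_ne k i
  · exact .inr (lp.single_apply_ne p j 1 hij)
  · exact .inl (lp.single_apply_ne p i 1 hk)

theorem apply_eq_mul_of_apply_single_ne_zero (hf : IsLatticeFunctional f) {i : ι}
    (hi : f (lp.single p i 1) ≠ 0) (x : ℓ^p(ι, ℝ)) :
    f x = f (lp.single p i 1) * x i := by
  have remainder_disjoint (j : ι) :
      (lp.single p i 1 : ℓ^p(ι, ℝ)) j = 0 ∨ (x - x i • lp.single p i 1 : ℓ^p(ι, ℝ)) j = 0 := by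
    obtain rfl | hj := eq_or_ne j i
    · right
      rw [lp.coeFn_sub, Pi.sub_apply, lp.coeFn_smul, Pi.smul_apply, lp.single_apply_self,
        smul_eq_mul, mul_one, sub_self]
    · exact .inl (lp.single_apply_ne p i 1 hj)
  have remainder_eq_zero := (hf.apply_eq_zero_or_apply_eq_zero remainder_disjoint).resolve_left hi
  rw [map_sub, map_smul, smul_eq_mul, sub_eq_zero] at remainder_eq_zero
  rw [remainder_eq_zero, mul_comm]

end Single

end IsLatticeFunctional

end LatticeFunctional

section InvariantIdeal

open scoped lp

variable {ι : Type*} {p : ℝ≥0∞} [Fact (1 ≤ p)] {f : ℓ^p(ι, ℝ) →L[ℝ] ℝ}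
  {T : ℓ^p(ι, ℝ) →L[ℝ] ℓ^p(ι, ℝ)}

theorem mem_orbitAnnihilator_of_abs_le (hf : IsLatticeFunctional f) (hT : IsLatticeOperator T)
    {x y : ℓ^p(ι, ℝ)} (hxy : ∀ i, |x i| ≤ |y i|) (hy : y ∈ orbitAnnihilator f T) :
    x ∈ orbitAnnihilator f T := by
  refine mem_orbitAnnihilator.2 fun k ↦ abs_nonpos_iff.1 ?_
  calc |f ((T ^ k) x)| ≤ |f ((T ^ k) y)| := (hf.comp_pow hT k).abs_apply_le_abs_apply hxy
    _ = 0 := by rw [mem_orbitAnnihilator.1 hy k, abs_zero]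

theorem orbitAnnihilator_ne_bot_of_apply_pow_eq_smul [Infinite ι] (hf : IsLatticeFunctional f)
    (hT : IsLatticeOperator T) {N : ℕ} (hN : 0 < N) {c : ℝ}
    (hrec : ∀ y, f ((T ^ N) y) = c • f y) : orbitAnnihilator f T ≠ ⊥ := by
  classical
  have finite_support : (⋃ k ∈ Set.Iio N, {i | f ((T ^ k) (lp.single p i 1)) ≠ 0}).Finite :=
    (Set.finite_Iio N).biUnion fun k _ ↦
      (hf.comp_pow hT k).subsingleton_setOf_apply_single_ne_zero.finite
  obtain ⟨i, hi⟩ := finite_support.exists_notMem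
  refine (Submodule.ne_bot_iff _).2 ⟨lp.single p i 1, ?_, lp_single_ne_zero one_ne_zero⟩
  exact mem_orbitAnnihilator_of_apply_pow_eq_smul hN hrec (by simpa using hi)

theorem orbitAnnihilator_evalCLM_comp_ne_bot [Infinite ι] (hT : IsLatticeOperator T) (i : ι) :
    orbitAnnihilator (lp.evalCLM ℝ (fun _ : ι ↦ ℝ) p i ∘L T) T ≠ ⊥ := by
  classical
  have hrow := (isLatticeFunctional_evalCLM p i).comp hT
  by_cases hmem : lp.single p i 1 ∈ orbitAnnihilator (lp.evalCLM ℝ (fun _ : ι ↦ ℝ) p i ∘L T) T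
  · exact (Submodule.ne_bot_iff _).2 ⟨_, hmem, lp_single_ne_zero one_ne_zero⟩
  · obtain ⟨k, hk⟩ := not_forall.1 (mt mem_orbitAnnihilator.2 hmem)
    exact orbitAnnihilator_ne_bot_of_apply_pow_eq_smul hrow hT k.succ_pos fun y ↦
      (hrow.comp_pow hT k).apply_eq_mul_of_apply_single_ne_zero hk (T y)

theorem exists_isLatticeFunctional_orbitAnnihilator_ne_bot [Infinite ι]
    (hT : IsLatticeOperator T) :
    ∃ f : ℓ^p(ι, ℝ) →L[ℝ] ℝ,
      IsLatticeFunctional f ∧ f ≠ 0 ∧ orbitAnnihilator f T ≠ ⊥ := by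
  classical
  obtain ⟨i⟩ : Nonempty ι := inferInstance
  have heval := isLatticeFunctional_evalCLM p i
  by_cases hrow : lp.evalCLM ℝ (fun _ : ι ↦ ℝ) p i ∘L T = 0
  · refine ⟨lp.evalCLM ℝ (fun _ : ι ↦ ℝ) p i, heval, fun hzero ↦ ?_, ?_⟩
    · simpa [lp.evalCLM] using DFunLike.congr_fun hzero (lp.single p i 1)
    · refine orbitAnnihilator_ne_bot_of_apply_pow_eq_smul heval hT one_pos (c := 0) fun y ↦ ?_
      simpa using DFunLike.congr_fun hrow y
  · exact ⟨_, heval.comp hT, hrow, orbitAnnihilator_evalCLM_comp_ne_bot hT i⟩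

theorem stmt_0_general [Infinite ι]
    (T : ℓ^p(ι, ℝ) →L[ℝ] ℓ^p(ι, ℝ)) (hT : IsLatticeOperator T) :
    ∃ I : Submodule ℝ (ℓ^p(ι, ℝ)),
      IsClosed (I : Set (ℓ^p(ι, ℝ))) ∧ I ≠ ⊥ ∧ I ≠ ⊤ ∧
      (∀ x y : ℓ^p(ι, ℝ), (∀ i, |x i| ≤ |y i|) → y ∈ I → x ∈ I) ∧
      (∀ x ∈ I, T x ∈ I) := by
  obtain ⟨f, hf, hf_ne_zero, hne_bot⟩ := exists_isLatticeFunctional_orbitAnnihilator_ne_bot hT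
  exact ⟨orbitAnnihilator f T, isClosed_orbitAnnihilator f T, hne_bot,
    orbitAnnihilator_ne_top T hf_ne_zero,
    fun _ _ ↦ mem_orbitAnnihilator_of_abs_le hf hT, fun _ ↦ map_mem_orbitAnnihilator⟩

end InvariantIdeal

/-- Every lattice homomorphism on `ℓᵖ` (`1 ≤ p < ∞`) has a non-trivial closed
invariant subspace; moreover, it has a non-trivial closed invariant ideal. -/
theorem stmt_0 (p : ℝ≥0∞) [Fact (1 ≤ p)] (hp : p ≠ ∞)
    (T : lp (fun _ : ℕ => ℝ) p →L[ℝ] lp (fun _ : ℕ => ℝ) p)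
    (hT : IsLatticeHom p T) :
    (∃ V : Submodule ℝ (lp (fun _ : ℕ => ℝ) p),
      IsClosed (V : Set (lp (fun _ : ℕ => ℝ) p)) ∧ V ≠ ⊥ ∧ V ≠ ⊤ ∧
      (∀ x ∈ V, T x ∈ V)) ∧
    HasNontrivialClosedInvariantIdeal p T := by
  obtain ⟨I, hclosed, hbot, htop, hideal, hinv⟩ := stmt_0_general T hT
  exact ⟨⟨I, hclosed, hbot, htop, hinv⟩, I, hclosed, hbot, htop, hideal, hinv⟩
end
end

section
/- Every interval preserving operator T on ℓ^p with 1 < p < ∞ has a non-trivial closed invariant subspace which is an ideal. -/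
open scoped ENNReal

noncomputable section

/-!
If `T` is interval preserving, every element of `[0, T eᵢ]` is the image of an element of
`[0, eᵢ]`, hence a multiple of `T eᵢ`; so `T eᵢ` is supported on a single coordinate `f i`. The map
`f` on the infinite index set leaves a non-empty proper subset `S` invariant: the strict forward
orbit of a point is proper, because it contains its starting point only if it is finite. The closed
span of `{eᵢ | i ∈ S}` is then invariant under `T`. It is also invariant under every multiplication
operator, and this makes it an ideal: `|x| ≤ |y|` means that `x` is a bounded multiple of `y`.
Working with the closed span rather than with all vectors supported in `S` includes `p = ∞`, where
an operator is not determined by its values on the unit vectors.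
-/

theorem exists_nonempty_ne_univ_mapsTo {α : Type*} [Infinite α] (f : α → α) :
    ∃ S : Set α, S.Nonempty ∧ S ≠ Set.univ ∧ Set.MapsTo f S S := by
  obtain ⟨x⟩ : Nonempty α := inferInstance
  refine ⟨Set.range fun n ↦ f^[n + 1] x, Set.range_nonempty _, fun orbit_eq_univ ↦ ?_, ?_⟩
  · obtain ⟨k, periodic⟩ : ∃ k, Function.IsPeriodicPt f (k + 1) x :=
      Set.range_eq_univ.1 orbit_eq_univ x
    have orbit_subset :
        (Set.range fun n ↦ f^[n + 1] x) ⊆ (fun n ↦ f^[n] x) '' Set.Iio (k + 1) := by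
      rintro _ ⟨n, rfl⟩
      exact ⟨(n + 1) % (k + 1), Nat.mod_lt _ k.succ_pos, periodic.iterate_mod_apply (n + 1)⟩
    rw [orbit_eq_univ] at orbit_subset
    exact Set.infinite_univ (((Set.finite_Iio (k + 1)).image _).subset orbit_subset)
  · rintro _ ⟨n, rfl⟩
    exact ⟨n + 1, Function.iterate_succ_apply' f (n + 1) x⟩

section ClosedCoordSpan

variable {𝕜 ι κ : Type*} [NontriviallyNormedField 𝕜] [DecidableEq ι] [DecidableEq κ]
  {p q : ℝ≥0∞} [Fact (1 ≤ p)] [Fact (1 ≤ q)]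

variable (𝕜 p) in
/-- The closed linear span in `ℓᵖ` of the unit vectors with index in `S`. For `p = ∞` this is the
copy of `c₀(S)`, not the space of all bounded families supported in `S`. -/
def closedCoordSpan (S : Set ι) : Submodule 𝕜 (lp (fun _ : ι ↦ 𝕜) p) :=
  (Submodule.span 𝕜 ((fun i ↦ lp.single p i 1) '' S)).topologicalClosure

namespace closedCoordSpan

variable {S : Set ι}

theorem isClosed : IsClosed (closedCoordSpan 𝕜 p S : Set (lp (fun _ : ι ↦ 𝕜) p)) :=
  Submodule.isClosed_topologicalClosure _

theorem single_mem {i : ι} (hi : i ∈ S) (c : 𝕜) : lp.single p i c ∈ closedCoordSpan 𝕜 p S := by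
  rw [← mul_one c, ← smul_eq_mul, lp.single_smul]
  exact Submodule.smul_mem _ c <| Submodule.le_topologicalClosure _ <|
    Submodule.subset_span (Set.mem_image_of_mem _ hi)

theorem le_iff {V : Submodule 𝕜 (lp (fun _ : ι ↦ 𝕜) p)}
    (hV : IsClosed (V : Set (lp (fun _ : ι ↦ 𝕜) p))) :
    closedCoordSpan 𝕜 p S ≤ V ↔ ∀ i ∈ S, lp.single p i 1 ∈ V := by
  refine ⟨fun h i hi ↦ h (single_mem hi 1), fun h ↦ ?_⟩
  refine Submodule.topologicalClosure_minimal _ (Submodule.span_le.2 ?_) hV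
  rintro _ ⟨i, hi, rfl⟩
  exact h i hi

theorem apply_eq_zero_of_notMem {x : lp (fun _ : ι ↦ 𝕜) p} (hx : x ∈ closedCoordSpan 𝕜 p S)
    {i : ι} (hi : i ∉ S) : x i = 0 := by
  let eval := lp.evalCLM 𝕜 (fun _ : ι ↦ 𝕜) p i
  suffices closedCoordSpan 𝕜 p S ≤ eval.ker from this hx
  exact (le_iff eval.isClosed_ker).2 fun j hj ↦
    Pi.single_eq_of_ne (ne_of_mem_of_not_mem hj hi).symm 1

theorem ne_bot (hS : S.Nonempty) : closedCoordSpan 𝕜 p S ≠ ⊥ := by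
  obtain ⟨i, hi⟩ := hS
  intro h
  have single_eq_zero : lp.single (E := fun _ : ι ↦ 𝕜) p i 1 = 0 :=
    (Submodule.mem_bot 𝕜).1 (h ▸ single_mem hi 1)
  exact one_ne_zero <| (lp.single_apply_self (E := fun _ ↦ 𝕜) p i 1).symm.trans
    (congrArg (lp.evalₗ (𝕜 := 𝕜) _ p i) single_eq_zero)

theorem ne_top (hS : S ≠ Set.univ) : closedCoordSpan 𝕜 p S ≠ ⊤ := by
  obtain ⟨i, hi⟩ := (Set.ne_univ_iff_exists_notMem S).1 hS
  intro h
  have hsingle : lp.single p i 1 ∈ closedCoordSpan 𝕜 p S := h ▸ Submodule.mem_top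
  exact one_ne_zero <| (lp.single_apply_self (E := fun _ ↦ 𝕜) p i 1).symm.trans
    (apply_eq_zero_of_notMem hsingle hi)

theorem map_mem {S' : Set κ} (A : lp (fun _ : ι ↦ 𝕜) p →L[𝕜] lp (fun _ : κ ↦ 𝕜) q)
    (hA : ∀ i ∈ S, A (lp.single p i 1) ∈ closedCoordSpan 𝕜 q S')
    {x : lp (fun _ : ι ↦ 𝕜) p} (hx : x ∈ closedCoordSpan 𝕜 p S) :
    A x ∈ closedCoordSpan 𝕜 q S' :=
  (le_iff (V := (closedCoordSpan 𝕜 q S').comap A.toLinearMap)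
    (isClosed.preimage A.continuous)).2 hA hx

theorem mem_of_norm_le {x y : lp (fun _ : ι ↦ 𝕜) p} (hxy : ∀ i, ‖x i‖ ≤ ‖y i‖)
    (hy : y ∈ closedCoordSpan 𝕜 p S) : x ∈ closedCoordSpan 𝕜 p S := by
  have norm_ratio_le (i : ι) : ‖(x i / y i) • ContinuousLinearMap.id 𝕜 𝕜‖ ≤ 1 := by
    rw [norm_smul, ContinuousLinearMap.norm_id, mul_one, norm_div]
    exact div_le_one_of_le₀ (hxy i) (norm_nonneg _)
  let M := lp.mapCLM p (fun i ↦ (x i / y i) • ContinuousLinearMap.id 𝕜 𝕜) zero_le_one norm_ratio_le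
  have M_apply (z : lp (fun _ : ι ↦ 𝕜) p) (i : ι) : M z i = x i / y i * z i := rfl
  have M_y : M y = x := by
    ext i
    rw [M_apply]
    -- Where `y i = 0` the ratio is the junk value `0`, but there `x i = 0` as well.
    exact div_mul_cancel_of_imp fun hyi ↦
      norm_le_zero_iff.1 (by simpa only [hyi, norm_zero] using hxy i)
  have M_single (i : ι) : M (lp.single p i 1) = lp.single p i (x i / y i) := by
    ext j
    rw [M_apply, lp.single_apply, lp.single_apply]
    rcases eq_or_ne j i with rfl | hji
    · simp only [Pi.single_eq_same, mul_one]
    · simp only [Pi.single_eq_of_ne hji, mul_zero]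
  exact M_y ▸ map_mem M (fun i hi ↦ M_single i ▸ single_mem hi _) hy

end closedCoordSpan

end ClosedCoordSpan

section IntervalPreserving

variable {ι κ : Type*} {p q : ℝ≥0∞}

/-- The order interval `[0, x]` of `ℓᵖ` for the coordinatewise order. -/
def orderInterval (x : lp (fun _ : ι ↦ ℝ) p) : Set (lp (fun _ : ι ↦ ℝ) p) :=
  {y | ∀ i, 0 ≤ y i ∧ y i ≤ x i}

/-- A map between sequence spaces is interval preserving if it maps `[0, x]` onto `[0, T x]` for
all `x ≥ 0`. Since `x ∈ [0, x]`, this includes `T x ≥ 0`. -/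
def IsIntervalPreserving (T : lp (fun _ : ι ↦ ℝ) p → lp (fun _ : κ ↦ ℝ) q) : Prop :=
  ∀ x, (∀ i, 0 ≤ x i) → T '' orderInterval x = orderInterval (T x)

theorem IsIntervalPreserving.map_nonneg {T : lp (fun _ : ι ↦ ℝ) p → lp (fun _ : κ ↦ ℝ) q}
    (hT : IsIntervalPreserving T) {x : lp (fun _ : ι ↦ ℝ) p} (hx : ∀ i, 0 ≤ x i) (j : κ) :
    0 ≤ T x j := by
  have : T x ∈ orderInterval (T x) :=
    hT x hx ▸ Set.mem_image_of_mem T fun i ↦ ⟨hx i, le_rfl⟩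
  exact (this j).1

variable [DecidableEq ι] [DecidableEq κ]

theorem single_apply_mem_orderInterval {x : lp (fun _ : ι ↦ ℝ) p} (hx : ∀ i, 0 ≤ x i) (i : ι) :
    lp.single p i (x i) ∈ orderInterval x := by
  intro j
  rcases eq_or_ne j i with rfl | hji
  · simpa only [lp.single_apply_self, le_refl, and_true] using hx j
  · simpa only [lp.single_apply, Pi.single_eq_of_ne hji, le_refl, true_and] using hx j

theorem eq_single_of_mem_orderInterval_single {i : ι} {a : ℝ} {y : lp (fun _ : ι ↦ ℝ) p}
    (hy : y ∈ orderInterval (lp.single p i a)) : y = lp.single p i (y i) := by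
  ext j
  rcases eq_or_ne j i with rfl | hji
  · rw [lp.single_apply_self]
  · have hyj := hy j
    rw [lp.single_apply, Pi.single_eq_of_ne hji] at hyj
    rw [lp.single_apply, Pi.single_eq_of_ne hji]
    exact le_antisymm hyj.2 hyj.1

theorem IsIntervalPreserving.exists_map_single_eq_single [Nonempty κ]
    {T : lp (fun _ : ι ↦ ℝ) p →ₗ[ℝ] lp (fun _ : κ ↦ ℝ) q} (hT : IsIntervalPreserving T) (i : ι) :
    ∃ j c, T (lp.single p i 1) = lp.single q j c := by
  set u := T (lp.single p i 1) with hu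
  have single_nonneg (k : ι) : 0 ≤ lp.single (E := fun _ ↦ ℝ) p i 1 k :=
    (Pi.single_nonneg.2 zero_le_one : (0 : ι → ℝ) ≤ Pi.single i 1) k
  by_cases hu_zero : ∀ j, u j = 0
  · exact ⟨Classical.arbitrary κ, 0, by rw [lp.single_zero]; exact lp.ext (funext hu_zero)⟩
  obtain ⟨j, huj⟩ := not_forall.1 hu_zero
  obtain ⟨y, hy, hTy⟩ : lp.single q j (u j) ∈ T '' orderInterval (lp.single p i 1) :=
    hT _ single_nonneg ▸ single_apply_mem_orderInterval (hT.map_nonneg single_nonneg) j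
  have single_eq_smul : lp.single q j (u j) = y i • u := by
    rw [← hTy, hu, ← map_smul, ← lp.single_smul, smul_eq_mul, mul_one,
      ← eq_single_of_mem_orderInterval_single hy]
  have coeff_eq_one : y i = 1 := by
    refine mul_right_cancel₀ huj ?_
    calc y i * u j = (y i • u) j := rfl
      _ = lp.single (E := fun _ ↦ ℝ) q j (u j) j := by rw [single_eq_smul]
      _ = 1 * u j := by rw [lp.single_apply_self, one_mul]
  exact ⟨j, u j, by rw [single_eq_smul, coeff_eq_one, one_smul]⟩

end IntervalPreserving

theorem stmt_1_general {ι : Type*} [Infinite ι] (p : ℝ≥0∞) [Fact (1 ≤ p)]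
    (T : lp (fun _ : ι ↦ ℝ) p →L[ℝ] lp (fun _ : ι ↦ ℝ) p) (hT : IsIntervalPreserving T) :
    ∃ I : Submodule ℝ (lp (fun _ : ι ↦ ℝ) p),
      IsClosed (I : Set (lp (fun _ : ι ↦ ℝ) p)) ∧ I ≠ ⊥ ∧ I ≠ ⊤ ∧
      (∀ x y : lp (fun _ : ι ↦ ℝ) p, (∀ i, |x i| ≤ |y i|) → y ∈ I → x ∈ I) ∧
      (∀ x ∈ I, T x ∈ I) := by
  classical
  choose f c map_single using
    IsIntervalPreserving.exists_map_single_eq_single (T := T.toLinearMap) hT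
  obtain ⟨S, S_nonempty, S_ne_univ, mapsTo_S⟩ := exists_nonempty_ne_univ_mapsTo f
  have map_single_mem (i : ι) (hi : i ∈ S) : T (lp.single p i 1) ∈ closedCoordSpan ℝ p S :=
    (map_single i).symm ▸ closedCoordSpan.single_mem (mapsTo_S hi) (c i)
  exact ⟨closedCoordSpan ℝ p S, closedCoordSpan.isClosed, closedCoordSpan.ne_bot S_nonempty,
    closedCoordSpan.ne_top S_ne_univ, fun _ _ hxy ↦ closedCoordSpan.mem_of_norm_le hxy,
    fun _ ↦ closedCoordSpan.map_mem T map_single_mem⟩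

/-- Every interval preserving operator on `ℓᵖ` (`1 < p < ∞`) has a non-trivial
closed invariant subspace which is an ideal. -/
theorem stmt_1 (p : ℝ≥0∞) [Fact (1 ≤ p)] (hp1 : 1 < p) (hp2 : p ≠ ∞)
    (T : lp (fun _ : ℕ => ℝ) p →L[ℝ] lp (fun _ : ℕ => ℝ) p)
    (hTpos : IsPositiveOp p T)
    (hT : ∀ x : lp (fun _ : ℕ => ℝ) p, (∀ n, 0 ≤ x n) →
      T '' {y : lp (fun _ : ℕ => ℝ) p | ∀ n, 0 ≤ y n ∧ y n ≤ x n} =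
        {z : lp (fun _ : ℕ => ℝ) p | ∀ n, 0 ≤ z n ∧ z n ≤ (T x) n}) :
    HasNontrivialClosedInvariantIdeal p T :=
  stmt_1_general p T hT
end
end

section
/- If T is a lattice isomorphism on ℓ^p (1 ≤ p < ∞), i.e., a bijective lattice homomorphism, then there exist a bijection ξ : ℕ → ℕ and a sequence of positive real numbers (w_n) such that T e_n = w_n e_{ξ(n)} for every n ∈ ℕ. -/
open scoped ENNReal

noncomputable section

/-!
An injective map `T` preserving suprema is an order embedding, since `x ≤ y` means `x ⊔ y = y`. So a
bijective lattice homomorphism maps discrete elements (those `x > 0` for which `[0, x]` contains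
only multiples of `x`) to discrete elements, and so does its inverse. In `ℓᵖ` the discrete elements
are exactly the positive multiples of the unit vectors; hence `T` and `T⁻¹` each send unit vectors
to positive multiples of unit vectors, and the two index maps are inverse to each other.
-/

theorem le_iff_le_of_map_sup {α β : Type*} [SemilatticeSup α] [SemilatticeSup β] {f : α → β}
    (hf : Function.Injective f) (hsup : ∀ x y, f (x ⊔ y) = f x ⊔ f y) (x y : α) :
    f x ≤ f y ↔ x ≤ y := by
  rw [← sup_eq_right, ← hsup, hf.eq_iff, sup_eq_right]

section DiscreteElement

variable {𝕜 E F : Type*} [Semiring 𝕜] [AddCommMonoid E] [Module 𝕜 E] [PartialOrder E]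
  [AddCommMonoid F] [Module 𝕜 F] [PartialOrder F]

variable (𝕜) in
/-- Discrete elements (atoms) in the sense of vector lattices: nonzero positive elements `x` whose
order interval `[0, x]` consists of scalar multiples of `x`. They are not atoms in the sense of
`IsAtom`, a notion relative to a least element. -/
structure IsDiscreteElement (x : E) : Prop where
  pos : 0 < x
  exists_eq_smul : ∀ y, 0 ≤ y → y ≤ x → ∃ c : 𝕜, y = c • x

theorem IsDiscreteElement.map {T : E ≃ₗ[𝕜] F} (hT : ∀ x y, T x ≤ T y ↔ x ≤ y) {x : E}
    (hx : IsDiscreteElement 𝕜 x) : IsDiscreteElement 𝕜 (T x) where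
  pos := by
    have hT_lt : T 0 < T x ↔ 0 < x := lt_iff_lt_of_le_iff_le' (hT _ _) (hT _ _)
    rw [← map_zero T, hT_lt]
    exact hx.pos
  exists_eq_smul z hz hzx := by
    obtain ⟨y, rfl⟩ := T.surjective z
    rw [← map_zero T, hT] at hz
    obtain ⟨c, rfl⟩ := hx.exists_eq_smul y hz ((hT _ _).1 hzx)
    exact ⟨c, map_smul T c x⟩

end DiscreteElement

section lp

open scoped lp

variable {ι κ : Type*} {p q : ℝ≥0∞}

theorem memℓp_sup {f g : ι → ℝ} (hf : Memℓp f p) (hg : Memℓp g p) : Memℓp (f ⊔ g) p :=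
  (hf.norm.add hg.norm).mono fun i => abs_max_le_max_abs_abs.trans <|
    max_le_add_of_nonneg (abs_nonneg (f i)) (abs_nonneg (g i))

/-- The coordinatewise order on `ℓᵖ`; Mathlib puts no order on `lp`. -/
instance : LE ℓ^p(ι, ℝ) := ⟨fun x y => (x : ι → ℝ) ≤ y⟩

instance : LT ℓ^p(ι, ℝ) := ⟨fun x y => (x : ι → ℝ) < y⟩

instance : Max ℓ^p(ι, ℝ) :=
  ⟨fun x y => ⟨fun i => x i ⊔ y i, memℓp_sup (lp.memℓp x) (lp.memℓp y)⟩⟩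

instance : SemilatticeSup ℓ^p(ι, ℝ) :=
  Function.Injective.semilatticeSup (fun x => (x : ι → ℝ)) (fun _ _ => lp.ext) Iff.rfl Iff.rfl
    fun _ _ => rfl

theorem exists_apply_pos_of_pos {x : ℓ^p(ι, ℝ)} (hx : 0 < x) : ∃ i, 0 < x i :=
  (Pi.lt_def.1 hx).2

variable [DecidableEq ι] [DecidableEq κ]

theorem lp_single_nonneg {i : ι} {a : ℝ} (ha : 0 ≤ a) : 0 ≤ (lp.single p i a : ℓ^p(ι, ℝ)) :=
  Pi.single_nonneg (α := fun _ : ι => ℝ).2 ha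

theorem eq_of_lp_single_one_eq_smul {i j : ι} {c : ℝ}
    (h : (lp.single p i 1 : ℓ^p(ι, ℝ)) = c • lp.single p j 1) : i = j := by
  by_contra hij
  have hi := congrArg (fun x : ℓ^p(ι, ℝ) => x i) h
  simp [hij] at hi

theorem isDiscreteElement_lp_single (i : ι) :
    IsDiscreteElement ℝ (lp.single p i 1 : ℓ^p(ι, ℝ)) where
  pos := Pi.lt_def.2 ⟨lp_single_nonneg zero_le_one, i, by simp⟩
  exists_eq_smul y hy hyi := by
    refine ⟨y i, lp.ext (funext fun j => ?_)⟩
    obtain rfl | hij := eq_or_ne j i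
    · simp
    · have hyj : y j ≤ 0 := by simpa [hij] using hyi j
      simpa [hij] using hyj.antisymm (hy j)

theorem IsDiscreteElement.exists_eq_smul_lp_single {x : ℓ^p(ι, ℝ)} (hx : IsDiscreteElement ℝ x) :
    ∃ i, ∃ w : ℝ, 0 < w ∧ x = w • lp.single p i 1 := by
  obtain ⟨i, hi⟩ := exists_apply_pos_of_pos hx.pos
  have hsingle_le : lp.single p i (x i) ≤ x := fun j => by
    obtain rfl | hij := eq_or_ne j i
    · simp
    · simpa [hij] using hx.pos.le j
  obtain ⟨c, hc⟩ := hx.exists_eq_smul _ (lp_single_nonneg hi.le) hsingle_le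
  have hc_one : c = 1 := by
    have hci := congrArg (fun y : ℓ^p(ι, ℝ) => y i) hc
    simpa [hi.ne'] using hci
  refine ⟨i, x i, hi, ?_⟩
  rw [← lp.single_smul, smul_eq_mul, mul_one, hc, hc_one, one_smul]

theorem exists_map_lp_single_eq_smul {T : ℓ^p(ι, ℝ) ≃ₗ[ℝ] ℓ^q(κ, ℝ)}
    (hT : ∀ x y, T x ≤ T y ↔ x ≤ y) (i : ι) :
    ∃ k, ∃ w : ℝ, 0 < w ∧ T (lp.single p i 1) = w • lp.single q k 1 :=
  ((isDiscreteElement_lp_single i).map hT).exists_eq_smul_lp_single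

theorem exists_equiv_map_lp_single_eq_smul {T : ℓ^p(ι, ℝ) ≃ₗ[ℝ] ℓ^q(κ, ℝ)}
    (hT : ∀ x y, T x ≤ T y ↔ x ≤ y) :
    ∃ ξ : ι ≃ κ, ∃ w : ι → ℝ, (∀ i, 0 < w i) ∧
      ∀ i, T (lp.single p i 1) = w i • lp.single q (ξ i) 1 := by
  have hT_symm : ∀ x y, T.symm x ≤ T.symm y ↔ x ≤ y := fun x y => by simp [← hT]
  choose ξ w hw hξ using exists_map_lp_single_eq_smul hT
  choose η v _ hη using exists_map_lp_single_eq_smul hT_symm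
  have hηξ : Function.LeftInverse η ξ := fun i => by
    have h : (lp.single p i 1 : ℓ^p(ι, ℝ)) = (w i * v (ξ i)) • lp.single p (η (ξ i)) 1 := by
      rw [← T.symm_apply_apply (lp.single p i 1), hξ, map_smul, hη, smul_smul]
    exact (eq_of_lp_single_one_eq_smul h).symm
  have hξη : Function.RightInverse η ξ := fun k => by
    have h : (lp.single q k 1 : ℓ^q(κ, ℝ)) = (v k * w (η k)) • lp.single q (ξ (η k)) 1 := by
      rw [← T.apply_symm_apply (lp.single q k 1), hη, map_smul, hξ, smul_smul]
    exact (eq_of_lp_single_one_eq_smul h).symm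
  exact ⟨⟨ξ, η, hηξ, hξη⟩, w, hw, hξ⟩

theorem stmt_2_general (T : ℓ^p(ι, ℝ) →ₗ[ℝ] ℓ^q(κ, ℝ)) (hT : ∀ x y, T (x ⊔ y) = T x ⊔ T y)
    (hbij : Function.Bijective T) :
    ∃ ξ : ι ≃ κ, ∃ w : ι → ℝ, (∀ i, 0 < w i) ∧
      ∀ i, T (lp.single p i 1) = w i • lp.single q (ξ i) 1 :=
  exists_equiv_map_lp_single_eq_smul (T := LinearEquiv.ofBijective T hbij)
    (le_iff_le_of_map_sup hbij.injective hT)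

end lp

theorem IsLatticeHom.map_sup {p : ℝ≥0∞} [Fact (1 ≤ p)]
    {T : lp (fun _ : ℕ => ℝ) p →L[ℝ] lp (fun _ : ℕ => ℝ) p} (hT : IsLatticeHom p T)
    (x y : lp (fun _ : ℕ => ℝ) p) : T (x ⊔ y) = T x ⊔ T y :=
  lp.ext (funext (hT x y (x ⊔ y) fun _ => rfl))

/-- A lattice isomorphism on `ℓᵖ` (`1 ≤ p < ∞`) is a weighted permutation
operator. -/
theorem stmt_2 (p : ℝ≥0∞) [Fact (1 ≤ p)] (hp : p ≠ ∞)
    (T : lp (fun _ : ℕ => ℝ) p →L[ℝ] lp (fun _ : ℕ => ℝ) p)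
    (hT : IsLatticeHom p T) (hbij : Function.Bijective T) :
    ∃ ξ : ℕ → ℕ, Function.Bijective ξ ∧
      ∃ w : ℕ → ℝ, (∀ n, 0 < w n) ∧ ∀ n, T (e p n) = w n • e p (ξ n) := by
  obtain ⟨ξ, w, hw, hξ⟩ := stmt_2_general T.toLinearMap hT.map_sup hbij
  exact ⟨ξ, ξ.bijective, w, hw, hξ⟩
end
end

section
/- If T is an injective lattice homomorphism on ℓ^p (1 ≤ p < ∞) whose range is dense in ℓ^p, then T is a weighted permutation operator: there exist a bijection ξ : ℕ → ℕ and positive real numbers w_n > 0 such that T e_n = w_n e_{ξ(n)} for every n ∈ ℕ. -/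
open scoped ENNReal

noncomputable section

/-!
A lattice homomorphism satisfies `T |x| = |T x|`, hence preserves disjointness. If `T eᵢ` is
non-zero at `k`, then `T` sends every vector vanishing at `i` to one vanishing at `k`, so that
`(T x) k = xᵢ (T eᵢ) k` for all `x`. A second non-zero coordinate of `T eᵢ` would therefore confine
the range of `T` to a closed hyperplane, so `T eᵢ` is a multiple of a unit vector. A coordinate `k`
at which all `T eᵢ` vanish contradicts density when `p < ∞`, since `(T x) k = ∑ xᵢ (T eᵢ) k`.
Between `ℓ^∞` spaces this series is not available; there, choosing `u` with `T u` uniformly close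
to `1` bounds `T` from below, so `T` is onto, and the preimage of `eₖ` gives the contradiction.
-/

variable {ι κ 𝕜 : Type*} {p q : ℝ≥0∞}

/-- A map between `ℓᵖ` spaces is disjointness preserving if it sends vectors with disjoint supports
to vectors with disjoint supports. Disjointness of the supports is expressed coordinatewise. -/
def IsDisjointnessPreserving [NormedField 𝕜]
    (T : lp (fun _ : ι => 𝕜) p → lp (fun _ : κ => 𝕜) q) : Prop :=
  ∀ x y, (∀ i, x i = 0 ∨ y i = 0) → ∀ k, T x k = 0 ∨ T y k = 0

/-- A map between real `ℓᵖ` spaces preserves binary suprema for the coordinatewise order. As in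
`IsLatticeHom`, the supremum `z` of `x` and `y` is given by its coordinates; here the index sets and
the exponents of the two spaces are arbitrary. -/
def PreservesCoordSup (T : lp (fun _ : ι => ℝ) p → lp (fun _ : κ => ℝ) q) : Prop :=
  ∀ x y z : lp (fun _ : ι => ℝ) p,
    (∀ i, z i = max (x i) (y i)) → ∀ k, T z k = max (T x k) (T y k)

section UnitVectors

variable [DecidableEq ι] [NormedField 𝕜]

theorem exists_coord_ne_zero_of_injective {F : Type*}
    [FunLike F (lp (fun _ : ι => 𝕜) p) (lp (fun _ : κ => 𝕜) q)]
    [AddMonoidHomClass F (lp (fun _ : ι => 𝕜) p) (lp (fun _ : κ => 𝕜) q)] {T : F}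
    (hinj : Function.Injective T) (i : ι) : ∃ k, T (lp.single p i 1) k ≠ 0 := by
  by_contra! hzero
  have hsingle : lp.single (E := fun _ => 𝕜) p i 1 = 0 :=
    hinj ((lp.ext (funext hzero)).trans (map_zero T).symm)
  have hi := congrArg (fun x : lp (fun _ : ι => 𝕜) p => x i) hsingle
  simp at hi

theorem exists_apply_single_ne_zero_of_denseRange [Fact (1 ≤ p)] [Fact (1 ≤ q)] (hp : p ≠ ∞)
    {T : lp (fun _ : ι => 𝕜) p →L[𝕜] lp (fun _ : κ => 𝕜) q} (hdense : DenseRange T) (k : κ) :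
    ∃ i, T (lp.single p i 1) k ≠ 0 := by
  classical
  by_contra! hzero
  have hcomp : (lp.evalCLM 𝕜 (fun _ : κ => 𝕜) q k).comp T = 0 := by
    refine lp.ext_continuousLinearMap hp fun i => ContinuousLinearMap.ext_ring ?_
    exact hzero i
  have heval : ⇑(lp.evalCLM 𝕜 (fun _ : κ => 𝕜) q k) = fun _ => 0 :=
    hdense.equalizer (ContinuousLinearMap.continuous _) continuous_const
      (congrArg DFunLike.coe hcomp)
  have hone : lp.single (E := fun _ => 𝕜) q k 1 k = 0 :=
    congrFun heval (lp.single q k 1)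
  rw [lp.single_apply_self] at hone
  exact one_ne_zero hone

namespace IsDisjointnessPreserving

variable {F : Type*} [FunLike F (lp (fun _ : ι => 𝕜) p) (lp (fun _ : κ => 𝕜) q)]
  [LinearMapClass F 𝕜 (lp (fun _ : ι => 𝕜) p) (lp (fun _ : κ => 𝕜) q)] {T : F}

theorem apply_eq_mul_apply_single (hT : IsDisjointnessPreserving T) {i : ι} {k : κ}
    (hik : T (lp.single p i 1) k ≠ 0) (x : lp (fun _ : ι => 𝕜) p) :
    T x k = x i * T (lp.single p i 1) k := by
  have hdisj : ∀ j, (x - x i • lp.single (E := fun _ => 𝕜) p i 1) j = 0 ∨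
      lp.single (E := fun _ => 𝕜) p i 1 j = 0 := by
    intro j
    obtain rfl | hj := eq_or_ne j i
    · left
      change x j - x j * lp.single (E := fun _ => 𝕜) p j 1 j = 0
      rw [lp.single_apply_self, mul_one, sub_self]
    · right; exact lp.single_apply_ne p i 1 hj
  have hrest : T (x - x i • lp.single p i 1) k = 0 := (hT _ _ hdisj k).resolve_right hik
  rw [map_sub, map_smul] at hrest
  exact sub_eq_zero.mp hrest

theorem index_eq_of_apply_single_ne_zero (hT : IsDisjointnessPreserving T) {i j : ι} {k : κ}
    (hi : T (lp.single p i 1) k ≠ 0) (hj : T (lp.single p j 1) k ≠ 0) : i = j := by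
  by_contra hij
  have h := hT.apply_eq_mul_apply_single hi (lp.single p j 1)
  rw [lp.single_apply_ne p j 1 hij, zero_mul] at h
  exact hj h

theorem coord_eq_of_apply_single_ne_zero [Fact (1 ≤ q)] (hT : IsDisjointnessPreserving T)
    (hdense : DenseRange T) {i : ι} {k l : κ} (hk : T (lp.single p i 1) k ≠ 0)
    (hl : T (lp.single p i 1) l ≠ 0) : k = l := by
  classical
  by_contra hkl
  have hrange : ∀ x, T (lp.single p i 1) l * T x k = T (lp.single p i 1) k * T x l := by
    intro x
    rw [hT.apply_eq_mul_apply_single hk x, hT.apply_eq_mul_apply_single hl x]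
    ring
  have hplane : (fun y : lp (fun _ : κ => 𝕜) q => T (lp.single p i 1) l * y k) =
      fun y => T (lp.single p i 1) k * y l :=
    hdense.equalizer (continuous_const.mul (lp.evalCLM 𝕜 (fun _ : κ => 𝕜) q k).continuous)
      (continuous_const.mul (lp.evalCLM 𝕜 (fun _ : κ => 𝕜) q l).continuous) (funext hrange)
  have hsingle : T (lp.single p i 1) l * lp.single (E := fun _ => 𝕜) q k 1 k =
      T (lp.single p i 1) k * lp.single (E := fun _ => 𝕜) q k 1 l := congrFun hplane _
  rw [lp.single_apply_self, lp.single_apply_ne q k 1 (Ne.symm hkl), mul_one, mul_zero] at hsingle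
  exact hl hsingle

theorem exists_apply_single_ne_zero_of_surjective (hT : IsDisjointnessPreserving T)
    (hinj : Function.Injective T) (hsurj : Function.Surjective T) (k : κ) :
    ∃ i, T (lp.single p i 1) k ≠ 0 := by
  classical
  obtain ⟨y, hy⟩ := hsurj (lp.single (E := fun _ => 𝕜) q k 1)
  have hy_ne : y ≠ 0 := by
    rintro rfl
    have hk := congrArg (fun z : lp (fun _ : κ => 𝕜) q => z k) hy
    simp at hk
  obtain ⟨i, hi⟩ : ∃ i, y i ≠ 0 := by
    by_contra! hzero
    exact hy_ne (lp.ext (funext hzero))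
  obtain ⟨l, hl⟩ := exists_coord_ne_zero_of_injective hinj i
  have hyl : lp.single (E := fun _ => 𝕜) q k 1 l ≠ 0 := by
    rw [← hy, hT.apply_eq_mul_apply_single hl]
    exact mul_ne_zero hi hl
  obtain rfl : l = k := by
    by_contra hlk
    exact hyl (lp.single_apply_ne q k 1 hlk)
  exact ⟨i, hl⟩

theorem apply_single_eq_smul_single [DecidableEq κ] [Fact (1 ≤ q)]
    (hT : IsDisjointnessPreserving T) (hdense : DenseRange T) {i : ι} {k : κ}
    (hk : T (lp.single p i 1) k ≠ 0) :
    T (lp.single p i 1) = T (lp.single p i 1) k • lp.single q k 1 := by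
  ext l
  obtain rfl | hlk := eq_or_ne l k
  · simp
  · have hl : T (lp.single p i 1) l = 0 := by
      by_contra hl
      exact hlk (hT.coord_eq_of_apply_single_ne_zero hdense hl hk)
    simp [hl, hlk]

end IsDisjointnessPreserving

end UnitVectors

namespace IsDisjointnessPreserving

theorem exists_antilipschitzWith_of_denseRange [NormedField 𝕜] {F : Type*}
    [FunLike F (lp (fun _ : ι => 𝕜) ∞) (lp (fun _ : κ => 𝕜) ∞)]
    [LinearMapClass F 𝕜 (lp (fun _ : ι => 𝕜) ∞) (lp (fun _ : κ => 𝕜) ∞)] {T : F}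
    (hT : IsDisjointnessPreserving T) (hinj : Function.Injective T) (hdense : DenseRange T) :
    ∃ K, AntilipschitzWith K T := by
  classical
  obtain ⟨u, hu⟩ := hdense.exists_dist_lt 1 (by norm_num : (0 : ℝ) < 1 / 2)
  have hTu : ∀ k, 1 / 2 ≤ ‖T u k‖ := by
    intro k
    have hclose : ‖1 - T u k‖ ≤ dist 1 (T u) :=
      dist_eq_norm (1 : lp (fun _ : κ => 𝕜) ∞) (T u) ▸
        lp.norm_apply_le_norm ENNReal.top_ne_zero (1 - T u) k
    have htriangle := norm_sub_norm_le 1 (T u k)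
    rw [norm_one] at htriangle
    linarith
  have hcoord : ∀ x i, ‖x i‖ ≤ 2 * ‖u‖ * ‖T x‖ := by
    intro x i
    obtain ⟨k, hk⟩ := exists_coord_ne_zero_of_injective hinj i
    have hcross : x i * T u k = u i * T x k := by
      rw [hT.apply_eq_mul_apply_single hk u, hT.apply_eq_mul_apply_single hk x]
      ring
    have hhalf : ‖x i‖ * (1 / 2) ≤ ‖u‖ * ‖T x‖ :=
      calc ‖x i‖ * (1 / 2) ≤ ‖x i‖ * ‖T u k‖ := by gcongr; exact hTu k
        _ = ‖u i‖ * ‖T x k‖ := by rw [← norm_mul, hcross, norm_mul]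
        _ ≤ ‖u‖ * ‖T x‖ := by
          gcongr <;> exact lp.norm_apply_le_norm ENNReal.top_ne_zero _ _
    linarith
  refine ⟨2 * ‖u‖₊, AddMonoidHomClass.antilipschitz_of_bound T fun x => ?_⟩
  exact lp.norm_le_of_forall_le (by positivity) (hcoord x)

theorem surjective_of_denseRange [NormedField 𝕜] [CompleteSpace 𝕜]
    {T : lp (fun _ : ι => 𝕜) ∞ →L[𝕜] lp (fun _ : κ => 𝕜) ∞} (hT : IsDisjointnessPreserving T)
    (hinj : Function.Injective T) (hdense : DenseRange T) : Function.Surjective T := by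
  obtain ⟨K, hK⟩ := hT.exists_antilipschitzWith_of_denseRange hinj hdense
  rw [← Set.range_eq_univ, ← (hK.isClosed_range T.uniformContinuous).closure_eq]
  exact hdense.closure_range

theorem exists_bijective_apply_single_eq_smul [DecidableEq ι] [DecidableEq κ] [NormedField 𝕜]
    [CompleteSpace 𝕜] [Fact (1 ≤ p)] [Fact (1 ≤ q)] (hpq : p = ∞ → q = ∞)
    {T : lp (fun _ : ι => 𝕜) p →L[𝕜] lp (fun _ : κ => 𝕜) q} (hT : IsDisjointnessPreserving T)
    (hinj : Function.Injective T) (hdense : DenseRange T) :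
    ∃ ξ : ι → κ, Function.Bijective ξ ∧ ∃ w : ι → 𝕜,
      (∀ i, w i ≠ 0) ∧ ∀ i, T (lp.single p i 1) = w i • lp.single q (ξ i) 1 := by
  have hhit : ∀ k, ∃ i, T (lp.single p i 1) k ≠ 0 := by
    by_cases hp : p = ∞
    · obtain rfl := hpq hp
      subst hp
      exact hT.exists_apply_single_ne_zero_of_surjective hinj
        (hT.surjective_of_denseRange hinj hdense)
    · exact exists_apply_single_ne_zero_of_denseRange hp hdense
  choose ξ hξ using exists_coord_ne_zero_of_injective hinj
  refine ⟨ξ, ⟨fun i j hij => ?_, fun k => ?_⟩, fun i => T (lp.single p i 1) (ξ i), hξ,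
    fun i => hT.apply_single_eq_smul_single hdense (hξ i)⟩
  · exact hT.index_eq_of_apply_single_ne_zero (hξ i) (hij ▸ hξ j)
  · obtain ⟨i, hi⟩ := hhit k
    exact ⟨i, hT.coord_eq_of_apply_single_ne_zero hdense (hξ i) hi⟩

end IsDisjointnessPreserving

namespace PreservesCoordSup

variable {F : Type*} [FunLike F (lp (fun _ : ι => ℝ) p) (lp (fun _ : κ => ℝ) q)]
  [AddMonoidHomClass F (lp (fun _ : ι => ℝ) p) (lp (fun _ : κ => ℝ) q)] {T : F}

theorem apply_nonneg (hT : PreservesCoordSup T) {x : lp (fun _ : ι => ℝ) p}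
    (hx : ∀ i, 0 ≤ x i) (k : κ) : 0 ≤ T x k := by
  have hmax : T x k = max (T x k) (T 0 k) := hT x 0 x (fun i => (max_eq_left (hx i)).symm) k
  rw [map_zero] at hmax
  exact max_eq_left_iff.mp hmax.symm

theorem apply_toNorm (hT : PreservesCoordSup T) (x : lp (fun _ : ι => ℝ) p) (k : κ) :
    T (lp.toNorm x) k = |T x k| := by
  have hmax : T (lp.toNorm x) k = max (T x k) (T (-x) k) := hT x (-x) _ (fun _ => rfl) k
  rw [map_neg] at hmax
  exact hmax

theorem isDisjointnessPreserving (hT : PreservesCoordSup T) : IsDisjointnessPreserving T := by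
  intro x y hxy k
  have hsup : ∀ i, (lp.toNorm x + lp.toNorm y) i = max (lp.toNorm x i) (lp.toNorm y i) := by
    intro i
    obtain hx | hy := hxy i
    · simp [hx]
    · simp [hy]
  have hsum : |T x k| + |T y k| = max |T x k| |T y k| := by
    have h := hT _ _ _ hsup k
    rwa [map_add, lp.coeFn_add, Pi.add_apply, hT.apply_toNorm, hT.apply_toNorm] at h
  obtain hx | hy := max_choice |T x k| |T y k|
  · right; exact abs_eq_zero.mp (by linarith)
  · left; exact abs_eq_zero.mp (by linarith)

end PreservesCoordSup

theorem stmt_3_general [DecidableEq ι] [DecidableEq κ] [Fact (1 ≤ p)] [Fact (1 ≤ q)]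
    (hpq : p = ∞ → q = ∞) {T : lp (fun _ : ι => ℝ) p →L[ℝ] lp (fun _ : κ => ℝ) q}
    (hT : PreservesCoordSup T) (hinj : Function.Injective T) (hdense : DenseRange T) :
    ∃ ξ : ι → κ, Function.Bijective ξ ∧ ∃ w : ι → ℝ,
      (∀ i, 0 < w i) ∧ ∀ i, T (lp.single p i 1) = w i • lp.single q (ξ i) 1 := by
  obtain ⟨ξ, hξ, w, hw, hTw⟩ :=
    hT.isDisjointnessPreserving.exists_bijective_apply_single_eq_smul hpq hinj hdense
  refine ⟨ξ, hξ, w, fun i => (hw i).symm.lt_of_le ?_, hTw⟩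
  have hsingle : 0 ≤ (Pi.single i 1 : ι → ℝ) := Pi.single_nonneg.mpr zero_le_one
  have hcoord : T (lp.single p i 1) (ξ i) = w i := by simp [hTw i]
  exact hcoord ▸ hT.apply_nonneg hsingle (ξ i)

/-- An injective, dense range lattice homomorphism on `ℓᵖ` (`1 ≤ p < ∞`) is a
weighted permutation operator. -/
theorem stmt_3 (p : ℝ≥0∞) [Fact (1 ≤ p)] (hp : p ≠ ∞)
    (T : lp (fun _ : ℕ => ℝ) p →L[ℝ] lp (fun _ : ℕ => ℝ) p)
    (hT : IsLatticeHom p T) (hinj : Function.Injective T)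
    (hdense : DenseRange T) :
    ∃ ξ : ℕ → ℕ, Function.Bijective ξ ∧
      ∃ w : ℕ → ℝ, (∀ n, 0 < w n) ∧ ∀ n, T (e p n) = w n • e p (ξ n) :=
  stmt_3_general id hT hinj hdense
end
end

section
/- Let T be a lattice homomorphism on ℓ^p (1 ≤ p < ∞) with matrix a_{n,m} = (T e_m) n. Then T is injective if and only if the matrix has no null columns, i.e., for every m there exists n with a_{n,m} ≠ 0 (equivalently, T e_m ≠ 0 for every m). -/
open scoped ENNReal

noncomputable section

/-! The kernel of a lattice homomorphism `T` is solid. Since `|x i • e i| ≤ |x|`, a vector `x` of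
the kernel has all its components `x i • e i` in the kernel, so a nonzero coordinate `x i` forces
`T (e i) = 0`. No approximation of `x` by finite sums is involved. -/

section LatticeGroup

variable {V W 𝓕 : Type*} [Lattice V] [AddCommGroup V] [Lattice W] [AddCommGroup W]
  [FunLike 𝓕 V W] {T : 𝓕}

theorem map_abs_of_map_sup [AddMonoidHomClass 𝓕 V W] (hT : ∀ x y, T (x ⊔ y) = T x ⊔ T y) (x : V) :
    T |x| = |T x| := by
  rw [abs, hT, map_neg, abs]

theorem eq_zero_of_abs_nonpos [IsOrderedAddMonoid W] {w : W} (hw : |w| ≤ 0) : w = 0 :=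
  le_antisymm ((le_abs_self w).trans hw) (neg_nonpos.mp ((neg_le_abs w).trans hw))

theorem isSolid_ker_of_map_sup [AddMonoidHomClass 𝓕 V W] [IsOrderedAddMonoid W]
    (hT : ∀ x y, T (x ⊔ y) = T x ⊔ T y) :
    LatticeOrderedAddCommGroup.IsSolid {x : V | T x = 0} := by
  intro y (hy : T y = 0) x hxy
  refine eq_zero_of_abs_nonpos ?_
  calc |T x| = T |x| := (map_abs_of_map_sup hT x).symm
    _ ≤ T |y| := Monotone.of_map_sup hT hxy
    _ = |T y| := map_abs_of_map_sup hT y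
    _ ≤ 0 := by rw [hy, abs, neg_zero, sup_idem]

end LatticeGroup

section LpLattice

variable {ι : Type*} {E : ι → Type*} [∀ i, NormedAddCommGroup (E i)] {p : ℝ≥0∞}

theorem lp_ne_zero_iff {x : lp E p} : x ≠ 0 ↔ ∃ i, x i ≠ 0 := by
  rw [ne_eq, lp.ext_iff, lp.coeFn_zero]
  exact Function.ne_iff

theorem memℓp_of_norm_le_norm_add_norm {f g h : ∀ i, E i} (hf : Memℓp f p) (hg : Memℓp g p)
    (hh : ∀ i, ‖h i‖ ≤ ‖f i‖ + ‖g i‖) : Memℓp h p :=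
  (hf.norm.add hg.norm).mono hh

variable [∀ i, Lattice (E i)] [∀ i, HasSolidNorm (E i)] [∀ i, IsOrderedAddMonoid (E i)]

/-- The coordinatewise lattice order on `ℓᵖ`; `IsLatticeHom` is preservation of its binary
suprema. -/
instance lpLattice : Lattice (lp E p) where
  le x y := ∀ i, x i ≤ y i
  le_refl _ _ := le_rfl
  le_trans _ _ _ hxy hyz i := (hxy i).trans (hyz i)
  le_antisymm _ _ hxy hyx := lp.ext (funext fun i => le_antisymm (hxy i) (hyx i))
  sup x y := ⟨fun i => x i ⊔ y i, memℓp_of_norm_le_norm_add_norm (lp.memℓp x) (lp.memℓp y)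
    fun i => norm_sup_le_add (x i) (y i)⟩
  inf x y := ⟨fun i => x i ⊓ y i, memℓp_of_norm_le_norm_add_norm (lp.memℓp x) (lp.memℓp y)
    fun i => norm_inf_le_add (x i) (y i)⟩
  le_sup_left _ _ _ := le_sup_left
  le_sup_right _ _ _ := le_sup_right
  sup_le _ _ _ hxz hyz i := sup_le (hxz i) (hyz i)
  inf_le_left _ _ _ := inf_le_left
  inf_le_right _ _ _ := inf_le_right
  le_inf _ _ _ hxy hxz i := le_inf (hxy i) (hxz i)

instance lpIsOrderedAddMonoid : IsOrderedAddMonoid (lp E p) where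
  add_le_add_left _ _ hxy z i := add_le_add_left (hxy i) (z i)

theorem lp_sup_apply (x y : lp E p) (i : ι) : (x ⊔ y) i = x i ⊔ y i := rfl

theorem lp_abs_apply (x : lp E p) (i : ι) : |x| i = |x i| := rfl

theorem abs_lp_single_le_abs [DecidableEq ι] (x : lp E p) (i : ι) :
    |lp.single p i (x i)| ≤ |x| := by
  intro j
  rw [lp_abs_apply, lp_abs_apply]
  obtain rfl | hji := eq_or_ne j i
  · rw [lp.single_apply_self]
  · rw [lp.single_apply_ne p i _ hji, abs_zero]
    exact abs_nonneg (x j)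

theorem map_lp_single_eq_zero_of_map_eq_zero [DecidableEq ι] {W 𝓕 : Type*} [Lattice W]
    [AddCommGroup W] [IsOrderedAddMonoid W] [FunLike 𝓕 (lp E p) W]
    [AddMonoidHomClass 𝓕 (lp E p) W] {T : 𝓕} (hT : ∀ x y, T (x ⊔ y) = T x ⊔ T y) {x : lp E p}
    (hx : T x = 0) (i : ι) : T (lp.single p i (x i)) = 0 :=
  isSolid_ker_of_map_sup hT hx (abs_lp_single_le_abs x i)

end LpLattice

theorem stmt_5_general {ι W : Type*} [DecidableEq ι] [Lattice W] [AddCommGroup W]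
    [IsOrderedAddMonoid W] [Module ℝ W] {p : ℝ≥0∞} (T : lp (fun _ : ι => ℝ) p →ₗ[ℝ] W)
    (hT : ∀ x y, T (x ⊔ y) = T x ⊔ T y) :
    Function.Injective T ↔ ∀ i, T (lp.single p i 1) ≠ 0 := by
  constructor
  · intro T_inj i
    have single_ne_zero : lp.single (E := fun _ : ι => ℝ) p i 1 ≠ 0 :=
      lp_ne_zero_iff.mpr ⟨i, (lp.single_apply_self p i 1).trans_ne one_ne_zero⟩
    exact (map_ne_zero_iff T T_inj).mpr single_ne_zero
  · intro column_ne_zero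
    refine (injective_iff_map_eq_zero T).mpr fun x hx => lp.ext (funext fun i => ?_)
    have smul_column_eq_zero : x i • T (lp.single p i 1) = 0 := by
      rw [← map_smul, ← lp.single_smul, smul_eq_mul, mul_one]
      exact map_lp_single_eq_zero_of_map_eq_zero hT hx i
    exact (smul_eq_zero.mp smul_column_eq_zero).resolve_right (column_ne_zero i)

/-- A lattice homomorphism on `ℓᵖ` (`1 ≤ p < ∞`) is injective if and only if
its matrix `a n m = (T eₘ) n` has no null columns. -/
theorem stmt_5 (p : ℝ≥0∞) [Fact (1 ≤ p)] (hp : p ≠ ∞)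
    (T : lp (fun _ : ℕ => ℝ) p →L[ℝ] lp (fun _ : ℕ => ℝ) p)
    (hT : IsLatticeHom p T) :
    Function.Injective T ↔ ∀ m : ℕ, ∃ n : ℕ, (T (e p m)) n ≠ 0 :=
  (stmt_5_general T.toLinearMap hT.map_sup).trans (forall_congr' fun _ => lp_ne_zero_iff)
end
end

section
/- Let W be the weighted shift on the complex Hilbert space ℓ² determined by W e_n = w_n e_{n+1} with weights w_n = exp((n+1)^{1/2} − n^{1/2}). Then every non-zero bounded linear operator S on ℓ² commuting with W (S ∘ W = W ∘ S) is not quasinilpotent at any non-zero vector: for every f ∈ ℓ² with f ≠ 0, limsup_{n→∞} ‖S^n f‖^{1/n} > 0. -/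
open scoped ENNReal

noncomputable section

/-! The idea is to diagonalize the commutant of `W` from the left. With `βₙ = w₀ ⋯ wₙ₋₁` bounded
below by a geometric sequence, the functional `ψ_z f = ∑ (zⁿ / βₙ) fₙ` is bounded for small `z` and
satisfies `ψ_z ∘ W = z ψ_z`. Since `e₀` is cyclic for `W`, every `S` commuting with `W` satisfies
`ψ_z ∘ S = c ψ_z` for a scalar `c` depending on `z`. As `z ↦ ψ_z f` and `z ↦ ψ_z (S g)` are nonzero
power series when `f ≠ 0` and `S g ≠ 0`, some small `z` makes both nonzero; then `c ≠ 0`, and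
`ψ_z (Sⁿ f) = cⁿ ψ_z f` forces `limsup ‖Sⁿ f‖ ^ (1/n) ≥ |c|`. -/

open Filter Topology

section Commutant

variable {𝕜 E : Type*} [Field 𝕜] [TopologicalSpace 𝕜] [IsTopologicalRing 𝕜] [AddCommMonoid E]
  [Module 𝕜 E] [TopologicalSpace E]

theorem apply_pow_apply_of_comp_eq_smul {T : E →L[𝕜] E} {ψ : E →L[𝕜] 𝕜} {c : 𝕜}
    (h : ψ ∘L T = c • ψ) (n : ℕ) (x : E) : ψ ((T ^ n) x) = c ^ n * ψ x := by
  induction n with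
  | zero => simp
  | succ n ih =>
    calc ψ ((T ^ (n + 1)) x) = (ψ ∘L T) ((T ^ n) x) := by rw [pow_succ']; rfl
      _ = c ^ (n + 1) * ψ x := by
        rw [h, smul_apply, ih, smul_eq_mul, pow_succ', mul_assoc]

theorem comp_eq_smul_of_commute_of_dense_span_orbit [T2Space 𝕜] {S T : E →L[𝕜] E}
    {ψ : E →L[𝕜] 𝕜} {z : 𝕜} {e : E} (hST : Commute S T) (hT : ψ ∘L T = z • ψ)
    (he : Dense (Submodule.span 𝕜 (Set.range fun n : ℕ => (T ^ n) e) : Set E)) (hψe : ψ e ≠ 0) :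
    ψ ∘L S = (ψ (S e) / ψ e) • ψ := by
  refine ContinuousLinearMap.ext_on he ?_
  rintro _ ⟨n, rfl⟩
  calc ψ (S ((T ^ n) e)) = ψ ((T ^ n) (S e)) :=
        congrArg ψ (DFunLike.congr_fun (hST.pow_right n).eq e)
    _ = z ^ n * ψ (S e) := apply_pow_apply_of_comp_eq_smul hT n (S e)
    _ = ψ (S e) / ψ e * (z ^ n * ψ e) := by field_simp
    _ = ψ (S e) / ψ e * ψ ((T ^ n) e) := by rw [apply_pow_apply_of_comp_eq_smul hT n e]

end Commutant

section Growth

theorem tendsto_mul_rpow_inv_natCast (a : ℝ) {d : ℝ} (hd : 0 < d) :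
    Tendsto (fun n : ℕ => a * d ^ (n : ℝ)⁻¹) atTop (𝓝 a) := by
  have hinv : Tendsto (fun n : ℕ => (n : ℝ)⁻¹) atTop (𝓝 0) := tendsto_inv_atTop_nhds_zero_nat
  have hrpow := (Real.continuousAt_const_rpow hd.ne').tendsto.comp hinv
  simpa only [Function.comp_def, Real.rpow_zero, mul_one] using hrpow.const_mul a

theorem pow_mul_rpow_inv_natCast {a d : ℝ} (ha : 0 ≤ a) (hd : 0 ≤ d) {n : ℕ} (hn : n ≠ 0) :
    (a ^ n * d) ^ (n : ℝ)⁻¹ = a * d ^ (n : ℝ)⁻¹ := by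
  rw [Real.mul_rpow (pow_nonneg ha n) hd, Real.pow_rpow_inv_natCast ha hn]

variable {𝕜 E : Type*} [NontriviallyNormedField 𝕜] [SeminormedAddCommGroup E] [NormedSpace 𝕜 E]

theorem isBoundedUnder_norm_pow_apply_rpow_inv (T : E →L[𝕜] E) (x : E) :
    IsBoundedUnder (· ≤ ·) atTop fun n : ℕ => ‖(T ^ n) x‖ ^ (n : ℝ)⁻¹ := by
  have hd : 0 < ‖x‖ + 1 := by positivity
  refine (tendsto_mul_rpow_inv_natCast ‖T‖ hd).isBoundedUnder_le.mono_le ?_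
  filter_upwards [eventually_ne_atTop 0] with n hn
  rw [← pow_mul_rpow_inv_natCast (norm_nonneg T) hd.le hn]
  gcongr
  calc ‖(T ^ n) x‖ ≤ ‖T ^ n‖ * ‖x‖ := (T ^ n).le_opNorm x
    _ ≤ ‖T‖ ^ n * (‖x‖ + 1) := by
      gcongr
      · exact norm_pow_le' T (Nat.pos_of_ne_zero hn)
      · exact le_add_of_nonneg_right zero_le_one

theorem norm_le_limsup_norm_pow_apply_of_comp_eq_smul {T : E →L[𝕜] E} {ψ : E →L[𝕜] 𝕜} {c : 𝕜}
    (h : ψ ∘L T = c • ψ) {x : E} (hx : ψ x ≠ 0) :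
    ‖c‖ ≤ limsup (fun n : ℕ => ‖(T ^ n) x‖ ^ (n : ℝ)⁻¹) atTop := by
  have hψx : 0 < ‖ψ x‖ := norm_pos_iff.2 hx
  have hψ : 0 < ‖ψ‖ := by
    by_contra! hψ
    exact hψx.not_ge ((ψ.le_of_opNorm_le hψ x).trans_eq (zero_mul _))
  have hd : 0 < ‖ψ x‖ / ‖ψ‖ := div_pos hψx hψ
  have hlower (n : ℕ) : ‖c‖ ^ n * (‖ψ x‖ / ‖ψ‖) ≤ ‖(T ^ n) x‖ := by
    rw [← mul_div_assoc, div_le_iff₀' hψ, ← norm_pow, ← norm_mul,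
      ← apply_pow_apply_of_comp_eq_smul h]
    exact ψ.le_opNorm _
  have hlim := tendsto_mul_rpow_inv_natCast ‖c‖ hd
  rw [← hlim.limsup_eq]
  refine limsup_le_limsup ?_ hlim.isCoboundedUnder_le (isBoundedUnder_norm_pow_apply_rpow_inv T x)
  filter_upwards [eventually_ne_atTop 0] with n hn
  rw [← pow_mul_rpow_inv_natCast (norm_nonneg c) hd.le hn]
  gcongr
  exact hlower n

end Growth

theorem eventually_ne_zero_of_hasSum_pow_mul {𝕜 : Type*} [NontriviallyNormedField 𝕜] {a : ℕ → 𝕜}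
    {F : 𝕜 → 𝕜} (ha : a ≠ 0) (hF : ∀ᶠ z in 𝓝 0, HasSum (fun n => z ^ n * a n) (F z)) :
    ∀ᶠ z in 𝓝[≠] 0, F z ≠ 0 := by
  have hseries : HasFPowerSeriesAt F (.ofScalars 𝕜 a) 0 := by
    simpa only [hasFPowerSeriesAt_iff, FormalMultilinearSeries.coeff_ofScalars, smul_eq_mul,
      zero_add] using hF
  exact hseries.locally_ne_zero
    ((FormalMultilinearSeries.ofScalars_series_eq_zero 𝕜).not.2 ha)

theorem dense_span_range_lp_single {ι 𝕜 : Type*} [DecidableEq ι] [NormedField 𝕜] {p : ℝ≥0∞}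
    [Fact (1 ≤ p)] (hp : p ≠ ∞) :
    Dense (Submodule.span 𝕜 (Set.range fun i => lp.single (E := fun _ : ι => 𝕜) p i 1) :
      Set (lp (fun _ : ι => 𝕜) p)) := by
  refine fun f => mem_closure_of_tendsto (lp.hasSum_single hp f) (.of_forall fun s => ?_)
  refine Submodule.sum_mem _ fun i _ => ?_
  have hsingle : lp.single p i (f i) = f i • lp.single (E := fun _ : ι => 𝕜) p i 1 := by
    rw [← lp.single_smul, smul_eq_mul, mul_one]
  rw [hsingle]
  exact Submodule.smul_mem _ _ (Submodule.subset_span ⟨i, rfl⟩)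

theorem norm_lp_evalCLM_le {ι 𝕜 : Type*} {E : ι → Type*} [NontriviallyNormedField 𝕜]
    [∀ i, NormedAddCommGroup (E i)] [∀ i, NormedSpace 𝕜 (E i)] {p : ℝ≥0∞} [Fact (1 ≤ p)] (i : ι) :
    ‖lp.evalCLM 𝕜 E p i‖ ≤ 1 :=
  LinearMap.mkContinuous_norm_le _ zero_le_one _

section WeightedShift

variable {𝕜 : Type*} [NontriviallyNormedField 𝕜] {p : ℝ≥0∞} [Fact (1 ≤ p)]

/-- `W` is a weighted (forward) shift on `ℓᵖ(ℕ)` with weights `w`, i.e. `W eₙ = wₙ eₙ₊₁`. For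
`p < ∞` this determines the bounded operator `W`. -/
def IsWeightedShift (w : ℕ → 𝕜) (W : lp (fun _ : ℕ => 𝕜) p →L[𝕜] lp (fun _ : ℕ => 𝕜) p) : Prop :=
  ∀ n, W (lp.single p n 1) = w n • lp.single p (n + 1) 1

variable (p) in
/-- The functional `f ↦ ∑ zⁿ / (w₀ ⋯ wₙ₋₁) fₙ` on `ℓᵖ(ℕ)`, a left eigenvector with eigenvalue `z`
of the weighted shift with weights `w`. The series is taken in the dual space, so the value is the
junk `0` where it is not summable. -/
def shiftEigenfunctional (w : ℕ → 𝕜) (z : 𝕜) : lp (fun _ : ℕ => 𝕜) p →L[𝕜] 𝕜 :=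
  ∑' n, (z ^ n / ∏ i ∈ Finset.range n, w i) • lp.evalCLM 𝕜 (fun _ : ℕ => 𝕜) p n

variable {w : ℕ → 𝕜} {W : lp (fun _ : ℕ => 𝕜) p →L[𝕜] lp (fun _ : ℕ => 𝕜) p} {r : ℝ} {z : 𝕜}

theorem prod_range_ne_zero_of_pow_le_norm (hr : 0 < r)
    (hw : ∀ n, r ^ n ≤ ‖∏ i ∈ Finset.range n, w i‖) (n : ℕ) : ∏ i ∈ Finset.range n, w i ≠ 0 :=
  norm_pos_iff.1 ((pow_pos hr n).trans_le (hw n))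

theorem IsWeightedShift.pow_apply_single_zero (hW : IsWeightedShift w W) (n : ℕ) :
    (W ^ n) (lp.single p 0 1) = (∏ i ∈ Finset.range n, w i) • lp.single p n 1 := by
  induction n with
  | zero => simp
  | succ n ih =>
    rw [pow_succ', mul_apply_eq_comp, ih, map_smul, hW n, smul_smul, Finset.prod_range_succ]

theorem IsWeightedShift.dense_span_orbit (hW : IsWeightedShift w W) (hp : p ≠ ∞)
    (hw : ∀ n, ∏ i ∈ Finset.range n, w i ≠ 0) :
    Dense (Submodule.span 𝕜 (Set.range fun n : ℕ => (W ^ n) (lp.single p 0 1)) :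
      Set (lp (fun _ : ℕ => 𝕜) p)) := by
  refine (dense_span_range_lp_single hp).mono (Submodule.span_le.2 ?_)
  rintro _ ⟨n, rfl⟩
  refine (Submodule.smul_mem_iff _ (hw n)).1 (Submodule.subset_span ⟨n, ?_⟩)
  exact hW.pow_apply_single_zero n

variable [CompleteSpace 𝕜]

theorem hasSum_shiftEigenfunctional (hw : ∀ n, r ^ n ≤ ‖∏ i ∈ Finset.range n, w i‖)
    (hz : ‖z‖ < r) :
    HasSum (fun n => (z ^ n / ∏ i ∈ Finset.range n, w i) • lp.evalCLM 𝕜 (fun _ : ℕ => 𝕜) p n)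
      (shiftEigenfunctional p w z) := by
  have hr : 0 < r := (norm_nonneg z).trans_lt hz
  have hgeom : Summable fun n : ℕ => (‖z‖ / r) ^ n :=
    summable_geometric_of_lt_one (by positivity) ((div_lt_one hr).2 hz)
  refine (Summable.of_norm_bounded hgeom fun n => ?_).hasSum
  calc ‖(z ^ n / ∏ i ∈ Finset.range n, w i) • lp.evalCLM 𝕜 (fun _ : ℕ => 𝕜) p n‖
      ≤ ‖z ^ n / ∏ i ∈ Finset.range n, w i‖ * 1 := by
        rw [norm_smul]
        gcongr
        exact norm_lp_evalCLM_le n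
    _ ≤ (‖z‖ / r) ^ n := by
        rw [mul_one, norm_div, norm_pow, div_pow]
        gcongr
        exact hw n

theorem hasSum_shiftEigenfunctional_apply (hw : ∀ n, r ^ n ≤ ‖∏ i ∈ Finset.range n, w i‖)
    (hz : ‖z‖ < r) (f : lp (fun _ : ℕ => 𝕜) p) :
    HasSum (fun n => z ^ n * (f n / ∏ i ∈ Finset.range n, w i)) (shiftEigenfunctional p w z f) := by
  have hsum := (hasSum_shiftEigenfunctional (p := p) hw hz).mapL (ContinuousLinearMap.apply 𝕜 𝕜 f)
  have hterm (n : ℕ) : z ^ n * (f n / ∏ i ∈ Finset.range n, w i) =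
      (z ^ n / ∏ i ∈ Finset.range n, w i) * f n := by ring
  simp only [hterm]
  exact hsum

theorem shiftEigenfunctional_single (hw : ∀ n, r ^ n ≤ ‖∏ i ∈ Finset.range n, w i‖)
    (hz : ‖z‖ < r) (n : ℕ) :
    shiftEigenfunctional p w z (lp.single p n 1) = z ^ n / ∏ i ∈ Finset.range n, w i := by
  refine (hasSum_shiftEigenfunctional_apply hw hz _).unique ?_
  convert hasSum_single n fun m hm => ?_ using 1
  · rw [lp.single_apply_self, mul_one_div]
  · rw [lp.single_apply_ne _ _ _ hm, zero_div, mul_zero]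

theorem IsWeightedShift.shiftEigenfunctional_comp (hW : IsWeightedShift w W) (hp : p ≠ ∞)
    (hw : ∀ n, r ^ n ≤ ‖∏ i ∈ Finset.range n, w i‖) (hz : ‖z‖ < r) :
    shiftEigenfunctional p w z ∘L W = z • shiftEigenfunctional p w z := by
  have hprod := prod_range_ne_zero_of_pow_le_norm ((norm_nonneg z).trans_lt hz) hw
  refine ContinuousLinearMap.ext_on (dense_span_range_lp_single hp) ?_
  rintro _ ⟨n, rfl⟩
  have hprod_succ := hprod (n + 1)
  rw [Finset.prod_range_succ] at hprod_succ
  have hwn : w n ≠ 0 := right_ne_zero_of_mul hprod_succ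
  calc shiftEigenfunctional p w z (W (lp.single p n 1))
      = w n * (z ^ (n + 1) / ∏ i ∈ Finset.range (n + 1), w i) := by
        rw [hW n, map_smul, shiftEigenfunctional_single hw hz, smul_eq_mul]
    _ = z * (z ^ n / ∏ i ∈ Finset.range n, w i) := by
        rw [Finset.prod_range_succ]
        field_simp [hprod n]
        ring
    _ = z * shiftEigenfunctional p w z (lp.single p n 1) := by
        rw [shiftEigenfunctional_single hw hz]

theorem eventually_shiftEigenfunctional_ne_zero (hr : 0 < r)
    (hw : ∀ n, r ^ n ≤ ‖∏ i ∈ Finset.range n, w i‖) {f : lp (fun _ : ℕ => 𝕜) p} (hf : f ≠ 0) :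
    ∀ᶠ z in 𝓝[≠] 0, shiftEigenfunctional p w z f ≠ 0 := by
  refine eventually_ne_zero_of_hasSum_pow_mul
    (a := fun n => f n / ∏ i ∈ Finset.range n, w i) ?_ ?_
  · contrapose! hf
    ext n
    exact (div_eq_zero_iff.1 (congrFun hf n)).resolve_right
      (prod_range_ne_zero_of_pow_le_norm hr hw n)
  · filter_upwards [Metric.ball_mem_nhds 0 hr] with z hz
    exact hasSum_shiftEigenfunctional_apply hw (mem_ball_zero_iff.1 hz) f

theorem stmt_7_general (hp : p ≠ ∞) (hr : 0 < r) (hw : ∀ n, r ^ n ≤ ‖∏ i ∈ Finset.range n, w i‖)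
    (hW : IsWeightedShift w W) {S : lp (fun _ : ℕ => 𝕜) p →L[𝕜] lp (fun _ : ℕ => 𝕜) p}
    (hS : S ≠ 0) (hSW : Commute S W) {f : lp (fun _ : ℕ => 𝕜) p} (hf : f ≠ 0) :
    0 < limsup (fun n : ℕ => ‖(S ^ n) f‖ ^ (n : ℝ)⁻¹) atTop := by
  obtain ⟨g, hg : S g ≠ 0⟩ := DFunLike.ne_iff.1 hS
  have hsmall : ∀ᶠ z : 𝕜 in 𝓝[≠] 0, ‖z‖ < r := by
    filter_upwards [nhdsWithin_le_nhds (Metric.ball_mem_nhds 0 hr)] with z hz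
      using mem_ball_zero_iff.1 hz
  obtain ⟨z, ⟨hψf, hψSg⟩, hz⟩ := (((eventually_shiftEigenfunctional_ne_zero hr hw hf).and
    (eventually_shiftEigenfunctional_ne_zero hr hw hg)).and hsmall).exists
  set ψ := shiftEigenfunctional p w z
  have hψe : ψ (lp.single p 0 1) = 1 := by
    simpa using shiftEigenfunctional_single (p := p) hw hz 0
  have hψS : ψ ∘L S = (ψ (S (lp.single p 0 1)) / ψ (lp.single p 0 1)) • ψ :=
    comp_eq_smul_of_commute_of_dense_span_orbit hSW (hW.shiftEigenfunctional_comp hp hw hz)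
      (hW.dense_span_orbit hp (prod_range_ne_zero_of_pow_le_norm hr hw)) (hψe.trans_ne one_ne_zero)
  refine lt_of_lt_of_le (norm_pos_iff.2 fun hc => hψSg ?_)
    (norm_le_limsup_norm_pow_apply_of_comp_eq_smul hψS hψf)
  calc ψ (S g) = ψ (S (lp.single p 0 1)) / ψ (lp.single p 0 1) * ψ g := DFunLike.congr_fun hψS g
    _ = 0 := by rw [hc, zero_mul]

end WeightedShift

theorem prod_range_exp_sub (u : ℕ → ℝ) (n : ℕ) :
    ∏ i ∈ Finset.range n, Real.exp (u (i + 1) - u i) = Real.exp (u n - u 0) := by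
  rw [← Real.exp_sum, Finset.sum_range_sub]

theorem one_le_norm_prod_range_exp_sqrt_sub_sqrt (n : ℕ) :
    1 ≤ ‖∏ i ∈ Finset.range n, (Real.exp (Real.sqrt ((i : ℝ) + 1) - Real.sqrt (i : ℝ)) : ℂ)‖ := by
  have h := prod_range_exp_sub (fun i => Real.sqrt i) n
  simp only [Nat.cast_add, Nat.cast_one, Nat.cast_zero, Real.sqrt_zero, sub_zero] at h
  rw [← Complex.ofReal_prod, h, Complex.norm_real, Real.norm_of_nonneg (Real.exp_nonneg _)]
  exact Real.one_le_exp (Real.sqrt_nonneg _)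

/-- Any non-zero operator commuting with the weighted shift
`W eₙ = exp((n+1)^{1/2} - n^{1/2}) e_{n+1}` on complex `ℓ²` is not
quasinilpotent at any non-zero vector. -/
theorem stmt_7
    (W : lp (fun _ : ℕ => ℂ) 2 →L[ℂ] lp (fun _ : ℕ => ℂ) 2)
    (hW : ∀ n : ℕ, W (lp.single 2 n 1) =
      (Real.exp (Real.sqrt ((n : ℝ) + 1) - Real.sqrt (n : ℝ)) : ℂ) •
        lp.single 2 (n + 1) 1)
    (S : lp (fun _ : ℕ => ℂ) 2 →L[ℂ] lp (fun _ : ℕ => ℂ) 2)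
    (hS : S ≠ 0) (hSW : S * W = W * S)
    (f : lp (fun _ : ℕ => ℂ) 2) (hf : f ≠ 0) :
    0 < Filter.atTop.limsup (fun n : ℕ => ‖(S ^ n) f‖ ^ ((n : ℝ)⁻¹)) :=
  stmt_7_general ENNReal.ofNat_ne_top one_pos
    (fun n => (one_pow n).trans_le (one_le_norm_prod_range_exp_sqrt_sub_sqrt n)) hW hS hSW hf
end
end

section
/- Let T be a positive bounded linear operator on ℓ^p (1 ≤ p < ∞) whose matrix a_{n,m} = (T e_m) n is tridiagonal (a_{n,m} = 0 whenever |n − m| > 1). If both the sub-diagonal (a_{n+1,n}) and the super-diagonal (a_{n,n+1}) have no null elements, i.e., a_{n+1,n} > 0 and a_{n,n+1} > 0 for all n, then T has no non-trivial closed invariant ideal. -/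
open scoped ENNReal

noncomputable section

/-!
A solid subspace `I` containing some `x` with `x i ≠ 0` contains the `i`-th unit vector. Hence, if
`I` is invariant under `T`, the set of indices whose unit vector lies in `I` is closed under
following nonzero matrix entries of `T`. When these entries connect every index to every other one,
that set is empty, and `I = ⊥`, or contains all indices, and then `I` is dense because `p < ∞`.
-/

open Relation

section Solid

variable {ι : Type*} {E : ι → Type*} [∀ i, NormedAddCommGroup (E i)] {p : ℝ≥0∞}

/-- A set of `ℓᵖ` is solid if it is closed under passing to elements of coordinatewise smaller
norm; a solid submodule of real `ℓᵖ` is an ideal of the Banach lattice `ℓᵖ`. -/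
def IsSolidSet (s : Set (lp E p)) : Prop :=
  ∀ x y : lp E p, (∀ i, ‖x i‖ ≤ ‖y i‖) → y ∈ s → x ∈ s

theorem IsSolidSet.single_apply_mem [DecidableEq ι] {s : Set (lp E p)} (hs : IsSolidSet s)
    {x : lp E p} (hx : x ∈ s) (i : ι) : lp.single p i (x i) ∈ s := by
  refine hs _ x (fun j => ?_) hx
  obtain rfl | hji := eq_or_ne j i
  · rw [lp.single_apply_self]
  · rw [lp.single_apply_ne p i _ hji, norm_zero]
    exact norm_nonneg _

theorem mem_of_isClosed_of_forall_single_apply_mem {S : Type*} [DecidableEq ι] [Fact (1 ≤ p)]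
    [SetLike S (lp E p)] [AddSubmonoidClass S (lp E p)] (hp : p ≠ ∞) {I : S}
    (hI : IsClosed (I : Set (lp E p))) {x : lp E p} (hx : ∀ i, lp.single p i (x i) ∈ I) : x ∈ I :=
  hI.mem_of_tendsto (lp.hasSum_single hp x) <| .of_forall fun _ => sum_mem fun i _ => hx i

end Solid

section UnitVectors

variable {ι 𝕜 : Type*} [DecidableEq ι] [NormedDivisionRing 𝕜] {p : ℝ≥0∞}
  {I : Submodule 𝕜 (lp (fun _ : ι => 𝕜) p)}

theorem single_mem_of_single_one_mem {i : ι} (hi : lp.single p i (1 : 𝕜) ∈ I) (c : 𝕜) :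
    lp.single p i c ∈ I := by
  simpa only [← lp.single_smul, smul_eq_mul, mul_one] using I.smul_mem c hi

theorem IsSolidSet.single_one_mem (hI : IsSolidSet (I : Set (lp (fun _ : ι => 𝕜) p)))
    {x : lp (fun _ : ι => 𝕜) p} (hx : x ∈ I) {i : ι} (hi : x i ≠ 0) :
    lp.single p i (1 : 𝕜) ∈ I := by
  simpa only [← lp.single_smul, smul_eq_mul, inv_mul_cancel₀ hi] using
    I.smul_mem (x i)⁻¹ (hI.single_apply_mem hx i)

theorem eq_top_of_isClosed_of_forall_single_one_mem [Fact (1 ≤ p)] (hp : p ≠ ∞)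
    (hI : IsClosed (I : Set (lp (fun _ : ι => 𝕜) p)))
    (h : ∀ i, lp.single p i (1 : 𝕜) ∈ I) : I = ⊤ :=
  (Submodule.eq_top_iff').2 fun x =>
    mem_of_isClosed_of_forall_single_apply_mem hp hI fun i =>
      single_mem_of_single_one_mem (h i) (x i)

/-- The directed graph of the matrix of `T`: there is an edge `i → j` when the matrix entry
`a_{j,i} = (T eᵢ) j` is nonzero. -/
def MatrixAdj (T : Module.End 𝕜 (lp (fun _ : ι => 𝕜) p)) (i j : ι) : Prop :=
  T (lp.single p i 1) j ≠ 0

variable {T : Module.End 𝕜 (lp (fun _ : ι => 𝕜) p)}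

theorem IsSolidSet.single_one_mem_of_reflTransGen
    (hI : IsSolidSet (I : Set (lp (fun _ : ι => 𝕜) p))) (hT : I ∈ T.invtSubmodule) {i j : ι}
    (hij : ReflTransGen (MatrixAdj T) i j) (hi : lp.single p i (1 : 𝕜) ∈ I) :
    lp.single p j (1 : 𝕜) ∈ I := by
  induction hij with
  | refl => exact hi
  | tail _ hadj ih => exact hI.single_one_mem (hT ih) hadj

theorem stmt_8_general [Fact (1 ≤ p)] (hp : p ≠ ∞)
    (hconn : ∀ i j, ReflTransGen (MatrixAdj T) i j)
    (hclosed : IsClosed (I : Set (lp (fun _ : ι => 𝕜) p)))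
    (hsolid : IsSolidSet (I : Set (lp (fun _ : ι => 𝕜) p))) (hinv : I ∈ T.invtSubmodule) :
    I = ⊥ ∨ I = ⊤ := by
  refine or_iff_not_imp_left.2 fun hbot => ?_
  obtain ⟨x, hxI, hx⟩ := I.exists_mem_ne_zero_of_ne_bot hbot
  obtain ⟨i, hxi⟩ : ∃ i, x i ≠ 0 := by
    by_contra! h
    exact hx (lp.ext (funext h))
  have hi : lp.single p i (1 : 𝕜) ∈ I := hsolid.single_one_mem hxI hxi
  exact eq_top_of_isClosed_of_forall_single_one_mem hp hclosed fun j =>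
    hsolid.single_one_mem_of_reflTransGen hinv (hconn i j) hi

end UnitVectors

/-- A positive tridiagonal operator on `ℓᵖ` (`1 ≤ p < ∞`) whose sub-diagonal and
super-diagonal have no null elements has no non-trivial closed invariant
ideal. -/
theorem stmt_8 (p : ℝ≥0∞) [Fact (1 ≤ p)] (hp : p ≠ ∞)
    (T : lp (fun _ : ℕ => ℝ) p →L[ℝ] lp (fun _ : ℕ => ℝ) p)
    (hTpos : IsPositiveOp p T) (htri : IsTridiagonal p T)
    (hsub : ∀ n : ℕ, 0 < (T (e p n)) (n + 1))
    (hsup : ∀ n : ℕ, 0 < (T (e p (n + 1))) n) :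
    ¬ HasNontrivialClosedInvariantIdeal p T := by
  rintro ⟨I, hclosed, hbot, htop, hsolid, hinv⟩
  have hconn (i j : ℕ) : ReflTransGen (MatrixAdj T.toLinearMap) i j :=
    reflTransGen_of_succ _ (fun n _ => (hsub n).ne') (fun n _ => (hsup n).ne')
  exact (stmt_8_general hp hconn hclosed hsolid hinv).elim hbot htop
end
end

section
/- Let T be a positive bounded linear operator on ℓ^p (1 ≤ p < ∞) whose matrix a_{n,m} = (T e_m) n is tridiagonal. If a_{n,n+1} · a_{n+1,n} = 0 for every n ∈ ℕ, then T has a non-trivial closed invariant ideal. -/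
open scoped ENNReal

noncomputable section

/-!
If `a_{k,k+1} = 0` or `a_{k+1,k} = 0` for a single `k`, a tridiagonal matrix is block triangular
with respect to the splitting of the indices into `{0, …, k}` and `{k+1, k+2, …}`, so the sequences
supported on one of the two blocks form an invariant ideal. Because the unit vectors span a dense
subspace when `p < ∞`, invariance can be read off the matrix.
-/

section Supported

variable {ι 𝕜 : Type*} {E : ι → Type*} [NormedRing 𝕜] [∀ i, NormedAddCommGroup (E i)]
  [∀ i, Module 𝕜 (E i)] [∀ i, IsBoundedSMul 𝕜 (E i)] {p : ℝ≥0∞} {S : Set ι}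

variable (𝕜 E p S) in
/-- The band of `S` in `lp E p`: the elements whose coordinates outside `S` vanish, encoded as an
intersection of kernels of coordinate evaluations. -/
def lpSupported : Submodule 𝕜 (lp E p) :=
  ⨅ i ∈ Sᶜ, LinearMap.ker (lp.evalₗ (𝕜 := 𝕜) E p i)

theorem mem_lpSupported {x : lp E p} : x ∈ lpSupported 𝕜 E p S ↔ ∀ i ∉ S, x i = 0 := by
  simp only [lpSupported, Submodule.mem_iInf, Set.mem_compl_iff, LinearMap.mem_ker, lp.evalₗ_apply]

theorem mem_lpSupported_of_norm_le {x y : lp E p} (hxy : ∀ i, ‖x i‖ ≤ ‖y i‖)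
    (hy : y ∈ lpSupported 𝕜 E p S) : x ∈ lpSupported 𝕜 E p S := by
  rw [mem_lpSupported] at hy ⊢
  exact fun i hi ↦ norm_le_zero_iff.1 <| (hxy i).trans_eq <| by rw [hy i hi, norm_zero]

theorem isClosed_lpSupported [Fact (1 ≤ p)] :
    IsClosed (lpSupported 𝕜 E p S : Set (lp E p)) := by
  simp only [lpSupported, Submodule.coe_iInf]
  exact isClosed_biInter fun i _ ↦ (lp.evalCLM 𝕜 E p i).isClosed_ker

theorem single_mem_lpSupported_iff [DecidableEq ι] {i : ι} {a : E i} :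
    lp.single p i a ∈ lpSupported 𝕜 E p S ↔ i ∈ S ∨ a = 0 := by
  rw [mem_lpSupported]
  refine ⟨fun h ↦ or_iff_not_imp_left.2 fun hi ↦ ?_, ?_⟩
  · simpa only [lp.single_apply_self] using h i hi
  · rintro (hi | rfl) j hj
    · exact lp.single_apply_ne p i a (ne_of_mem_of_not_mem hi hj).symm
    · rw [lp.single_zero, lp.coeFn_zero, Pi.zero_apply]

theorem lpSupported_ne_bot {i : ι} [Nontrivial (E i)] (hi : i ∈ S) : lpSupported 𝕜 E p S ≠ ⊥ := by
  classical
  obtain ⟨a, ha⟩ := exists_ne (0 : E i)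
  refine (Submodule.ne_bot_iff _).2
    ⟨lp.single p i a, single_mem_lpSupported_iff.2 (.inl hi), fun h ↦ ?_⟩
  exact ha <| by rw [← lp.single_apply_self p i a, h, lp.coeFn_zero, Pi.zero_apply]

theorem lpSupported_ne_top {i : ι} [Nontrivial (E i)] (hi : i ∉ S) : lpSupported 𝕜 E p S ≠ ⊤ := by
  classical
  obtain ⟨a, ha⟩ := exists_ne (0 : E i)
  intro h
  have hmem : lp.single p i a ∈ lpSupported 𝕜 E p S := h ▸ Submodule.mem_top
  exact (single_mem_lpSupported_iff.1 hmem).elim hi ha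

theorem lpSupported_le_iff_single_mem [DecidableEq ι] [Fact (1 ≤ p)] (hp : p ≠ ∞)
    {K : Submodule 𝕜 (lp E p)} (hK : IsClosed (K : Set (lp E p))) :
    lpSupported 𝕜 E p S ≤ K ↔ ∀ i ∈ S, ∀ a : E i, lp.single p i a ∈ K := by
  refine ⟨fun h i hi a ↦ h (single_mem_lpSupported_iff.2 (.inl hi)), fun h x hx ↦ ?_⟩
  have hterm (i : ι) : lp.single p i (x i) ∈ K := by
    by_cases hi : i ∈ S
    · exact h i hi (x i)
    · rw [mem_lpSupported.1 hx i hi, lp.single_zero]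
      exact K.zero_mem
  exact hK.mem_of_tendsto (lp.hasSum_single hp x) (.of_forall fun s ↦ K.sum_mem fun i _ ↦ hterm i)

theorem lpSupported_mem_invtSubmodule_iff [DecidableEq ι] [Fact (1 ≤ p)] (hp : p ≠ ∞)
    {T : lp E p →L[𝕜] lp E p} :
    lpSupported 𝕜 E p S ∈ Module.End.invtSubmodule T.toLinearMap ↔
      ∀ j ∈ S, ∀ a : E j, ∀ i ∉ S, T (lp.single p j a) i = 0 := by
  rw [Module.End.mem_invtSubmodule,
    lpSupported_le_iff_single_mem hp (isClosed_lpSupported.preimage T.continuous)]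
  exact forall₃_congr fun _ _ _ ↦ mem_lpSupported

end Supported

section RealSequences

variable {p : ℝ≥0∞}

theorem single_eq_smul_e (m : ℕ) (a : ℝ) : lp.single p m a = a • e p m := by
  rw [e, ← lp.single_smul, smul_eq_mul, mul_one]

theorem hasNontrivialClosedInvariantIdeal_of_matrix_eq_zero [Fact (1 ≤ p)] (hp : p ≠ ∞)
    {T : lp (fun _ : ℕ => ℝ) p →L[ℝ] lp (fun _ : ℕ => ℝ) p} {S : Set ℕ} (hS : S.Nonempty)
    (hSc : Sᶜ.Nonempty) (h : ∀ m ∈ S, ∀ n ∉ S, T (e p m) n = 0) :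
    HasNontrivialClosedInvariantIdeal p T := by
  obtain ⟨m₀, hm₀⟩ := hS
  obtain ⟨n₀, hn₀⟩ := hSc
  have hinv : lpSupported ℝ (fun _ ↦ ℝ) p S ∈ Module.End.invtSubmodule T.toLinearMap := by
    refine (lpSupported_mem_invtSubmodule_iff hp).2 fun m hm a n hn ↦ ?_
    rw [single_eq_smul_e, map_smul, lp.coeFn_smul, Pi.smul_apply, h m hm n hn, smul_zero]
  exact ⟨lpSupported ℝ (fun _ ↦ ℝ) p S, isClosed_lpSupported, lpSupported_ne_bot hm₀,
    lpSupported_ne_top hn₀, fun _ _ hxy hy ↦ mem_lpSupported_of_norm_le hxy hy, hinv⟩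

variable [Fact (1 ≤ p)] {T : lp (fun _ : ℕ => ℝ) p →L[ℝ] lp (fun _ : ℕ => ℝ) p}

theorem IsTridiagonal.upper_block_eq_zero (hT : IsTridiagonal p T) {k : ℕ}
    (hk : T (e p (k + 1)) k = 0) {n m : ℕ} (hn : n ≤ k) (hm : k < m) : T (e p m) n = 0 := by
  by_cases hcorner : n = k ∧ m = k + 1
  · rwa [hcorner.1, hcorner.2]
  · exact hT n m (by lia)

theorem IsTridiagonal.lower_block_eq_zero (hT : IsTridiagonal p T) {k : ℕ}
    (hk : T (e p k) (k + 1) = 0) {n m : ℕ} (hn : k < n) (hm : m ≤ k) : T (e p m) n = 0 := by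
  by_cases hcorner : n = k + 1 ∧ m = k
  · rwa [hcorner.1, hcorner.2]
  · exact hT n m (by lia)

theorem stmt_9_general (hp : p ≠ ∞) (htri : IsTridiagonal p T) {k : ℕ}
    (hk : T (e p (k + 1)) k * T (e p k) (k + 1) = 0) :
    HasNontrivialClosedInvariantIdeal p T := by
  rcases mul_eq_zero.1 hk with hupper | hlower
  · refine hasNontrivialClosedInvariantIdeal_of_matrix_eq_zero hp (S := Set.Ioi k)
      Set.nonempty_Ioi ⟨k, Set.self_notMem_Ioi⟩ fun m hm n hn ↦ ?_
    exact htri.upper_block_eq_zero hupper (Set.notMem_Ioi.1 hn) hm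
  · refine hasNontrivialClosedInvariantIdeal_of_matrix_eq_zero hp (S := Set.Iic k)
      Set.nonempty_Iic ⟨k + 1, Set.notMem_Iic.2 k.lt_succ_self⟩ fun m hm n hn ↦ ?_
    exact htri.lower_block_eq_zero hlower (Set.notMem_Iic.1 hn) hm

end RealSequences

/-- A positive tridiagonal operator on `ℓᵖ` (`1 ≤ p < ∞`) satisfying
`a_{n,n+1} ⬝ a_{n+1,n} = 0` for every `n` has a non-trivial closed invariant
ideal. -/
theorem stmt_9 (p : ℝ≥0∞) [Fact (1 ≤ p)] (hp : p ≠ ∞)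
    (T : lp (fun _ : ℕ => ℝ) p →L[ℝ] lp (fun _ : ℕ => ℝ) p)
    (hTpos : IsPositiveOp p T) (htri : IsTridiagonal p T)
    (h : ∀ n : ℕ, (T (e p (n + 1))) n * (T (e p n)) (n + 1) = 0) :
    HasNontrivialClosedInvariantIdeal p T :=
  stmt_9_general hp htri (h 0)
end
end

section
/- Let T be a positive bounded linear operator on ℓ^p (1 ≤ p < ∞) whose matrix a_{n,m} = (T e_m) n is tridiagonal, and suppose a_{n₀, n₀+1} = 0 for some n₀ ∈ ℕ, i.e., coordinate n₀ of T e_{n₀+1} vanishes. Then for every k ≥ 1, every i ≤ n₀ and every j ≥ n₀ + 1, the (i, j) entry of the matrix of T^k vanishes: (T^k e_j) i = 0. -/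
open scoped ENNReal

noncomputable section

/-!
The vanishing entries form the whole block of `T` with rows `i ≤ n₀` and columns `j > n₀`. Since
`p < ∞`, each vector is the sum of its coordinate vectors, so this block vanishes exactly when `T`
maps the closed ideal of sequences supported on `{j | n₀ < j}` into itself, and invariance of a
subspace passes to powers.
-/

section VanishingOn

variable {𝕜 ι κ : Type*} {E : ι → Type*} {F : κ → Type*} {p q : ℝ≥0∞} [NormedRing 𝕜]
  [∀ i, NormedAddCommGroup (E i)] [∀ i, Module 𝕜 (E i)] [∀ i, IsBoundedSMul 𝕜 (E i)]
  [∀ i, NormedAddCommGroup (F i)] [∀ i, Module 𝕜 (F i)] [∀ i, IsBoundedSMul 𝕜 (F i)]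

variable (𝕜 E p) in
/-- The submodule of `ℓᵖ` of all families whose coordinates in `S` vanish. For real sequences these
submodules are the closed ideals of the Banach lattice `ℓᵖ`, `p < ∞`. -/
def vanishingOn (S : Set ι) : Submodule 𝕜 (lp E p) :=
  ⨅ i ∈ S, (lp.evalₗ E p i).ker

theorem mem_vanishingOn {S : Set ι} {x : lp E p} :
    x ∈ vanishingOn 𝕜 E p S ↔ ∀ i ∈ S, x i = 0 := by
  simp only [vanishingOn, Submodule.mem_iInf, LinearMap.mem_ker, lp.evalₗ_apply]

theorem single_mem_vanishingOn [DecidableEq ι] {S : Set ι} {j : ι} (hj : j ∉ S) (v : E j) :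
    lp.single p j v ∈ vanishingOn 𝕜 E p S :=
  mem_vanishingOn.mpr fun _ hi => lp.single_apply_ne p j v (ne_of_mem_of_not_mem hi hj)

theorem isClosed_vanishingOn [Fact (1 ≤ p)] (S : Set ι) :
    IsClosed (vanishingOn 𝕜 E p S : Set (lp E p)) := by
  simp only [vanishingOn, Submodule.coe_iInf]
  exact isClosed_biInter fun i _ => (lp.evalCLM 𝕜 E p i).isClosed_ker

theorem vanishingOn_le_of_forall_single_mem [DecidableEq ι] [Fact (1 ≤ p)] (hp : p ≠ ∞) {S : Set ι}
    {K : Submodule 𝕜 (lp E p)} (hK : IsClosed (K : Set (lp E p)))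
    (hsingle : ∀ j ∉ S, ∀ v : E j, lp.single p j v ∈ K) :
    vanishingOn 𝕜 E p S ≤ K := by
  intro x hx
  have single_coord_mem (j : ι) : lp.single p j (x j) ∈ K := by
    by_cases hj : j ∈ S
    · rw [mem_vanishingOn.mp hx j hj, lp.single_zero]
      exact K.zero_mem
    · exact hsingle j hj (x j)
  exact hK.mem_of_tendsto (lp.hasSum_single hp x)
    (.of_forall fun _ => K.sum_mem fun j _ => single_coord_mem j)

theorem mapsTo_vanishingOn [DecidableEq ι] [Fact (1 ≤ p)] [Fact (1 ≤ q)] (hp : p ≠ ∞)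
    {S : Set ι} {R : Set κ} {T : lp E p →L[𝕜] lp F q}
    (hT : ∀ i ∈ R, ∀ j ∉ S, ∀ v : E j, T (lp.single p j v) i = 0) :
    Set.MapsTo T (vanishingOn 𝕜 E p S) (vanishingOn 𝕜 F q R) :=
  vanishingOn_le_of_forall_single_mem (K := (vanishingOn 𝕜 F q R).comap T.toLinearMap) hp
    ((isClosed_vanishingOn R).preimage T.continuous)
    fun j hj v => mem_vanishingOn.mpr fun i hi => hT i hi j hj v

end VanishingOn

theorem single_eq_smul_single_one {𝕜 ι : Type*} [NormedRing 𝕜] [DecidableEq ι] (p : ℝ≥0∞)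
    (j : ι) (c : 𝕜) :
    lp.single (E := fun _ => 𝕜) p j c = c • lp.single (E := fun _ => 𝕜) p j 1 := by
  rw [← lp.single_smul, smul_eq_mul, mul_one]

theorem IsTridiagonal.apply_e_eq_zero {p : ℝ≥0∞} [Fact (1 ≤ p)]
    {T : lp (fun _ : ℕ => ℝ) p →L[ℝ] lp (fun _ : ℕ => ℝ) p} (htri : IsTridiagonal p T)
    {n₀ : ℕ} (h : T (e p (n₀ + 1)) n₀ = 0) {i j : ℕ} (hi : i ≤ n₀) (hj : n₀ < j) :
    T (e p j) i = 0 := by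
  by_cases hij : i + 1 < j
  · exact htri i j (.inr hij)
  · obtain ⟨rfl, rfl⟩ : i = n₀ ∧ j = n₀ + 1 := by lia
    exact h

theorem stmt_15_general {𝕜 ι : Type*} [NormedRing 𝕜] [DecidableEq ι] {p : ℝ≥0∞} [Fact (1 ≤ p)]
    (hp : p ≠ ∞) {T : lp (fun _ : ι => 𝕜) p →L[𝕜] lp (fun _ : ι => 𝕜) p} {S : Set ι}
    (hT : ∀ i ∈ S, ∀ j ∉ S, T (lp.single p j 1) i = 0) (k : ℕ) {i j : ι} (hi : i ∈ S)
    (hj : j ∉ S) :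
    (T ^ k) (lp.single p j 1) i = 0 := by
  have invariant :
      Set.MapsTo T (vanishingOn 𝕜 (fun _ : ι => 𝕜) p S) (vanishingOn 𝕜 (fun _ : ι => 𝕜) p S) := by
    refine mapsTo_vanishingOn hp fun i hi j hj c => ?_
    rw [single_eq_smul_single_one, map_smul, lp.coeFn_smul, Pi.smul_apply, hT i hi j hj, smul_zero]
  rw [FunLike.coe_pow_eq_iterate]
  exact mem_vanishingOn.mp (invariant.iterate k (single_mem_vanishingOn hj 1)) i hi

/-- If `T` is positive and tridiagonal on `ℓᵖ` (`1 ≤ p < ∞`) with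
`a_{n₀,n₀+1} = 0`, then the `(i, j)` entry of the matrix of `T^k` vanishes for
every `k ≥ 1`, `i ≤ n₀` and `j ≥ n₀ + 1`. -/
theorem stmt_15 (p : ℝ≥0∞) [Fact (1 ≤ p)] (hp : p ≠ ∞)
    (T : lp (fun _ : ℕ => ℝ) p →L[ℝ] lp (fun _ : ℕ => ℝ) p)
    (hTpos : IsPositiveOp p T) (htri : IsTridiagonal p T)
    (n₀ : ℕ) (h : (T (e p (n₀ + 1))) n₀ = 0) :
    ∀ k : ℕ, 1 ≤ k → ∀ i j : ℕ, i ≤ n₀ → n₀ + 1 ≤ j →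
      ((T ^ k) (e p j)) i = 0 := by
  have block_eq_zero : ∀ i ∈ Set.Iic n₀, ∀ j ∉ Set.Iic n₀, T (e p j) i = 0 :=
    fun _ hi _ hj => htri.apply_e_eq_zero h hi (Set.notMem_Iic.mp hj)
  exact fun k _ _ _ hi hj => stmt_15_general hp block_eq_zero k hi (Set.notMem_Iic.mpr hj)
end
end

section
/- Let T be the bounded linear operator on ℓ^p (1 ≤ p < ∞) defined by (Tx) 0 = x 1 and (Tx) n = x (n−1) + x (n+1) for n ≥ 1. Then T is a positive operator with no non-trivial closed invariant ideal. -/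
open scoped ENNReal

noncomputable section

/-! Associate with an operator `T` on `ℓᵖ` the directed graph on the indices with an arc `i → j`
whenever `(T eᵢ) j ≠ 0`. An ideal contains `eᵢ` as soon as one of its elements is non-zero at `i`,
so the set of those `i` is non-empty if the ideal is non-zero, and is closed under following arcs
if the ideal is `T`-invariant. When the graph is strongly connected, the ideal therefore contains
every `eⱼ`, and for `p < ∞` these span a dense subspace.
-/

section ClosedSubmodule

variable {α 𝕜 : Type*} {E : α → Type*} {p : ℝ≥0∞} [DecidableEq α] [NormedRing 𝕜]
  [∀ i, NormedAddCommGroup (E i)] [∀ i, Module 𝕜 (E i)] [∀ i, IsBoundedSMul 𝕜 (E i)]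

theorem eq_top_of_isClosed_of_forall_single_mem [Fact (1 ≤ p)] (hp : p ≠ ∞)
    {I : Submodule 𝕜 (lp E p)} (hclosed : IsClosed (I : Set (lp E p)))
    (hsingle : ∀ i a, lp.single p i a ∈ I) : I = ⊤ :=
  I.eq_top_iff'.mpr fun x =>
    hclosed.mem_of_tendsto (lp.hasSum_single hp x) <|
      .of_forall fun _ => I.sum_mem fun i _ => hsingle i (x i)

end ClosedSubmodule

section SolidSubmodule

variable {α 𝕜 : Type*} [NormedField 𝕜] {p : ℝ≥0∞}

/-- The ideals of the sequence space `ℓᵖ(α, 𝕜)`: subspaces stable under domination. Comparing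
coordinates by their norm lets the notion make sense over any normed field; over `ℝ` it is the
usual notion of an order ideal. -/
def IsSolidSubmodule (I : Submodule 𝕜 (lp (fun _ : α => 𝕜) p)) : Prop :=
  ∀ x y : lp (fun _ : α => 𝕜) p, (∀ i, ‖x i‖ ≤ ‖y i‖) → y ∈ I → x ∈ I

variable [DecidableEq α]

/-- The arcs `i → j` of the directed graph of a map on `ℓᵖ(α, 𝕜)`. For linear `T`, these are the
non-zero entries of its matrix, with the column index `i` as the source. -/
def IsArc (T : lp (fun _ : α => 𝕜) p → lp (fun _ : α => 𝕜) p) (i j : α) : Prop :=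
  T (lp.single p i 1) j ≠ 0

namespace IsSolidSubmodule

variable {I : Submodule 𝕜 (lp (fun _ : α => 𝕜) p)}
  {T : lp (fun _ : α => 𝕜) p → lp (fun _ : α => 𝕜) p}

theorem single_one_mem_of_apply_ne_zero (hI : IsSolidSubmodule I)
    {y : lp (fun _ : α => 𝕜) p} (hy : y ∈ I) {i : α} (hyi : y i ≠ 0) :
    lp.single p i (1 : 𝕜) ∈ I := by
  refine hI _ ((y i)⁻¹ • y) (fun j => ?_) (I.smul_mem _ hy)
  obtain rfl | hji := eq_or_ne j i
  · simp [hyi]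
  · simpa [hji] using norm_nonneg (((y i)⁻¹ • y) j)

theorem single_one_mem_of_reflTransGen (hI : IsSolidSubmodule I) (hT : Set.MapsTo T I I)
    {i j : α} (hij : Relation.ReflTransGen (IsArc T) i j) (hi : lp.single p i (1 : 𝕜) ∈ I) :
    lp.single p j (1 : 𝕜) ∈ I := by
  induction hij with
  | refl => exact hi
  | tail _ harc hmem => exact hI.single_one_mem_of_apply_ne_zero (hT hmem) harc

theorem eq_bot_or_eq_top [Fact (1 ≤ p)] (hp : p ≠ ∞) (hI : IsSolidSubmodule I)
    (hclosed : IsClosed (I : Set (lp (fun _ : α => 𝕜) p))) (hT : Set.MapsTo T I I)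
    (hconn : ∀ i j, Relation.ReflTransGen (IsArc T) i j) : I = ⊥ ∨ I = ⊤ := by
  refine or_iff_not_imp_left.mpr fun hbot => ?_
  obtain ⟨y, hy, hy0⟩ := I.ne_bot_iff.mp hbot
  obtain ⟨i, hyi⟩ : ∃ i, y i ≠ 0 := by
    contrapose! hy0
    exact lp.ext (funext hy0)
  refine eq_top_of_isClosed_of_forall_single_mem hp hclosed fun j a => ?_
  have hj : lp.single p j (1 : 𝕜) ∈ I :=
    hI.single_one_mem_of_reflTransGen hT (hconn i j) (hI.single_one_mem_of_apply_ne_zero hy hyi)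
  simpa [← lp.single_smul] using I.smul_mem a hj

end IsSolidSubmodule

end SolidSubmodule

theorem not_hasNontrivialClosedInvariantIdeal_of_forall_reflTransGen {p : ℝ≥0∞} [Fact (1 ≤ p)]
    (hp : p ≠ ∞) {T : lp (fun _ : ℕ => ℝ) p →L[ℝ] lp (fun _ : ℕ => ℝ) p}
    (hconn : ∀ i j, Relation.ReflTransGen (IsArc T) i j) :
    ¬ HasNontrivialClosedInvariantIdeal p T := by
  rintro ⟨I, hclosed, hbot, htop, hsolid, hinv⟩
  have hI : IsSolidSubmodule I := hsolid
  exact (hI.eq_bot_or_eq_top hp hclosed hinv hconn).elim hbot htop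

/-- The operator on `ℓᵖ` (`1 ≤ p < ∞`) given by `(Tx)₀ = x₁` and
`(Tx)ₙ = x_{n-1} + x_{n+1}` for `n ≥ 1` is positive and has no non-trivial
closed invariant ideal. -/
theorem stmt_16 (p : ℝ≥0∞) [Fact (1 ≤ p)] (hp : p ≠ ∞)
    (T : lp (fun _ : ℕ => ℝ) p →L[ℝ] lp (fun _ : ℕ => ℝ) p)
    (hT0 : ∀ x : lp (fun _ : ℕ => ℝ) p, (T x) 0 = x 1)
    (hT1 : ∀ x : lp (fun _ : ℕ => ℝ) p, ∀ n : ℕ,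
      (T x) (n + 1) = x n + x (n + 2)) :
    IsPositiveOp p T ∧ ¬ HasNontrivialClosedInvariantIdeal p T := by
  have hpos : IsPositiveOp p T := by
    rintro x hx (_ | n)
    · rw [hT0]
      exact hx 1
    · rw [hT1]
      exact add_nonneg (hx n) (hx (n + 2))
  have hup (n : ℕ) : IsArc T n (n + 1) := by
    simp [IsArc, hT1]
  have hdown : ∀ n : ℕ, IsArc T (n + 1) n
    | 0 => by simp [IsArc, hT0]
    | n + 1 => by simp [IsArc, hT1, show n ≠ n + 2 by lia]
  exact ⟨hpos, not_hasNontrivialClosedInvariantIdeal_of_forall_reflTransGen hp fun _ _ =>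
    reflTransGen_of_succ _ (fun n _ => hup n) (fun n _ => hdown n)⟩
end
end
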